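/- arXiv:1902.02406 — 2 statements merged into one kernel-verified Lean document; each statement's English description precedes it below -/
import Mathlib

section
/- Let p ∈ (1,∞) and θ_p = 2 arcsin(2√(p−1)/p). Then there exists C_p ∈ (0,∞) such that for every n,d ∈ ℕ with 1 ≤ d ≤ n and every function f : {-1,1}^n → ℂ of degree at most d: if p ∈ (1,2), then ‖∇f‖_{L_p} ≤ C_p · d^{(2/p) − θ_p/(pπ)} · log(d+1) · ‖f‖_{L_p}; and if p ∈ [2,∞), then ‖∇f‖_{L_p} ≤ C_p · d^{1 − θ_p/(2π)} · ‖f‖_{L_p}. -/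
open scoped BigOperators ENNReal NNReal

noncomputable section

namespace HammingCube

variable {X : Type*} [NormedAddCommGroup X] [NormedSpace ℂ X]

/-- The sign ±1 associated to a boolean coordinate. -/
def sgn (b : Bool) : ℝ := if b then 1 else -1

/-- The Walsh function `w_A(ε) = ∏_{i ∈ A} ε_i`. -/
def walsh {n : ℕ} (A : Finset (Fin n)) (ε : Fin n → Bool) : ℝ := ∏ i ∈ A, sgn (ε i)

/-- The Fourier–Walsh coefficient `f̂(A) = 2⁻ⁿ ∑_δ f(δ) w_A(δ)`. -/
def coeff {n : ℕ} (f : (Fin n → Bool) → X) (A : Finset (Fin n)) : X :=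
  (2 ^ n : ℝ)⁻¹ • ∑ δ : Fin n → Bool, walsh A δ • f δ

/-- `f` has degree at most `d`: `f̂(A) = 0` whenever `|A| > d`. -/
def degLE {n : ℕ} (f : (Fin n → Bool) → X) (d : ℕ) : Prop :=
  ∀ A : Finset (Fin n), d < A.card → coeff f A = 0

/-- `f` belongs to the `d`-th tail space: `f̂(A) = 0` whenever `|A| < d`. -/
def tailSpace {n : ℕ} (f : (Fin n → Bool) → X) (d : ℕ) : Prop :=
  ∀ A : Finset (Fin n), A.card < d → coeff f A = 0

/-- The heat semigroup `e^{-tΔ} f = ∑_A e^{-t|A|} f̂(A) w_A`. -/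
def heat {n : ℕ} (t : ℝ) (f : (Fin n → Bool) → X) : (Fin n → Bool) → X :=
  fun ε => ∑ A : Finset (Fin n), Real.exp (-t * A.card) • walsh A ε • coeff f A

/-- The hypercube Laplacian `Δ f = ∑_A |A| f̂(A) w_A`. -/
def lap {n : ℕ} (f : (Fin n → Bool) → X) : (Fin n → Bool) → X :=
  fun ε => ∑ A : Finset (Fin n), (A.card : ℝ) • walsh A ε • coeff f A

/-- The fractional Laplacian `Δ^γ f = ∑_A |A|^γ f̂(A) w_A`. -/
def fracLap {n : ℕ} (γ : ℝ) (f : (Fin n → Bool) → X) : (Fin n → Bool) → X :=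
  fun ε => ∑ A : Finset (Fin n), ((A.card : ℝ) ^ γ) • walsh A ε • coeff f A

/-- The `i`-th discrete partial derivative. -/
def pderiv {n : ℕ} (i : Fin n) (f : (Fin n → Bool) → X) : (Fin n → Bool) → X :=
  fun ε => (2 : ℝ)⁻¹ • (f ε - f (Function.update ε i (!(ε i))))

/-- The vector-valued `L_p` norm `(2⁻ⁿ ∑_ε ‖f(ε)‖^p)^{1/p}` for finite `p`. -/
def lpNorm {n : ℕ} {Y : Type*} [NormedAddCommGroup Y] (p : ℝ)
    (f : (Fin n → Bool) → Y) : ℝ :=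
  ((2 ^ n : ℝ)⁻¹ * ∑ ε : Fin n → Bool, ‖f ε‖ ^ p) ^ (1 / p)

/-- The `L_∞` norm `max_ε ‖f(ε)‖`. -/
def linfNorm {n : ℕ} {Y : Type*} [NormedAddCommGroup Y]
    (f : (Fin n → Bool) → Y) : ℝ :=
  ⨆ ε : Fin n → Bool, ‖f ε‖

/-- The `L_p` norm for `p ∈ [1,∞]` encoded as `p : ℝ≥0∞`. -/
def lpNormE {n : ℕ} {Y : Type*} [NormedAddCommGroup Y] (p : ℝ≥0∞)
    (f : (Fin n → Bool) → Y) : ℝ :=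
  if p = ⊤ then linfNorm f else lpNorm p.toReal f

/-- The scalar `L_p` norm of the gradient `‖(∑_i |∂_i f|²)^{1/2}‖_{L_p}`. -/
def gradLpNorm {n : ℕ} (p : ℝ) (f : (Fin n → Bool) → ℂ) : ℝ :=
  lpNorm p (fun ε => Real.sqrt (∑ i : Fin n, ‖pderiv i f ε‖ ^ 2))

/-- The Rademacher projection `Rad f(ε) = ∑_i f̂({i}) ε_i`. -/
def Rad {n : ℕ} (f : (Fin n → Bool) → X) : (Fin n → Bool) → X :=
  fun ε => ∑ i : Fin n, sgn (ε i) • coeff f {i}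

/-- A complex Banach space is `K`-convex if the Rademacher projections are uniformly
bounded on `L_q` for some `q ∈ (1,∞)`. -/
def KConvex (X : Type*) [NormedAddCommGroup X] [NormedSpace ℂ X] : Prop :=
  ∃ q : ℝ, 1 < q ∧ ∃ M : ℝ, ∀ (n : ℕ) (f : (Fin n → Bool) → X),
    lpNorm q (Rad f) ≤ M * lpNorm q f

/-- `X` has cotype `q` with constant `C`. -/
def HasCotype (X : Type*) [NormedAddCommGroup X] [NormedSpace ℂ X] (q C : ℝ) : Prop :=
  ∀ (n : ℕ) (x : Fin n → X),
    C⁻¹ * (∑ i : Fin n, ‖x i‖ ^ q) ^ (1 / q) ≤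
      ((2 ^ n : ℝ)⁻¹ * ∑ ε : Fin n → Bool, ‖∑ i : Fin n, sgn (ε i) • x i‖ ^ q) ^ (1 / q)

/-- The entropy `Ent(h)` of a nonnegative function on the cube. -/
def entropy {n : ℕ} (h : (Fin n → Bool) → ℝ) : ℝ :=
  (2 ^ n : ℝ)⁻¹ * ∑ ε : Fin n → Bool, h ε * Real.log (h ε) -
    ((2 ^ n : ℝ)⁻¹ * ∑ ε : Fin n → Bool, h ε) *
      Real.log ((2 ^ n : ℝ)⁻¹ * ∑ ε : Fin n → Bool, h ε)

/-- The `L_∞` norm of the gradient `max_ε (∑_i |∂_i f(ε)|²)^{1/2}`. -/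
def gradLinfNorm {n : ℕ} (f : (Fin n → Bool) → ℂ) : ℝ :=
  ⨆ ε : Fin n → Bool, Real.sqrt (∑ i : Fin n, ‖pderiv i f ε‖ ^ 2)

lemma sinh_mul_le_aux {l y : ℝ} (hl0 : 0 ≤ l) (hl1 : l ≤ 1) (hy : 0 ≤ y) :
    Real.sinh (l * y) ≤ l * Real.sinh y := by
  have hmono : MonotoneOn (fun y => l * Real.sinh y - Real.sinh (l * y)) (Set.Ici 0) := by
    apply monotoneOn_of_deriv_nonneg (convex_Ici 0)
    · fun_prop
    · fun_prop
    · intro x hx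
      simp only [interior_Ici, Set.mem_Ioi] at hx
      have h1 : HasDerivAt (fun y => l * Real.sinh y - Real.sinh (l * y))
          (l * Real.cosh x - Real.cosh (l * x) * (l * 1)) x :=
        ((Real.hasDerivAt_sinh x).const_mul l).sub
          (((hasDerivAt_id x).const_mul l).sinh)
      rw [h1.deriv]
      have : Real.cosh (l * x) ≤ Real.cosh x := by
        rw [Real.cosh_le_cosh, abs_mul, abs_of_nonneg hl0, abs_of_pos hx]
        nlinarith
      nlinarith
  have := hmono (Set.mem_Ici.2 le_rfl) (Set.mem_Ici.2 hy) hy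
  simp at this
  linarith

lemma scalar_ineq {p r s : ℝ} (hp : 1 < p) (hr : 0 < r) (hs : 0 < s) :
    p * |r ^ (p - 1) * s - s ^ (p - 1) * r| ≤ |p - 2| * |r ^ p - s ^ p| := by
  obtain ⟨u, rfl⟩ : ∃ u, r = Real.exp u := ⟨Real.log r, (Real.exp_log hr).symm⟩
  obtain ⟨v, rfl⟩ : ∃ u, s = Real.exp u := ⟨Real.log s, (Real.exp_log hs).symm⟩
  have e1 : Real.exp u ^ p - Real.exp v ^ p
      = Real.exp (p * (u + v) / 2) * 2 * Real.sinh (p * (u - v) / 2) := by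
    rw [Real.sinh_eq, ← Real.exp_mul, ← Real.exp_mul]
    have : ∀ x y z : ℝ, x * 2 * ((y - z) / 2) = x * y - x * z := by intros; ring
    rw [this, ← Real.exp_add, ← Real.exp_add]
    congr 2 <;> ring
  have e2 : Real.exp u ^ (p - 1) * Real.exp v - Real.exp v ^ (p - 1) * Real.exp u
      = Real.exp (p * (u + v) / 2) * 2 * Real.sinh ((p - 2) * (u - v) / 2) := by
    rw [Real.sinh_eq, ← Real.exp_mul, ← Real.exp_mul, ← Real.exp_add, ← Real.exp_add]
    have : ∀ x y z : ℝ, x * 2 * ((y - z) / 2) = x * y - x * z := by intros; ring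
    rw [this, ← Real.exp_add, ← Real.exp_add]
    congr 2 <;> ring
  rw [e1, e2, abs_mul, abs_mul _ (Real.sinh (p * (u - v) / 2)), Real.abs_sinh, Real.abs_sinh]
  have h0 : |(p - 2) * (u - v) / 2| = (|p - 2| / p) * |p * (u - v) / 2| := by
    rw [abs_div, abs_div, abs_mul, abs_mul, abs_of_pos (by linarith : 0 < p)]
    field_simp
  have hl : |p - 2| / p ≤ 1 := by
    rw [div_le_one (by linarith), abs_le]
    constructor <;> linarith
  have h1 := sinh_mul_le_aux (div_nonneg (abs_nonneg (p - 2)) (by linarith : 0 ≤ p)) hl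
    (abs_nonneg (p * (u - v) / 2))
  rw [← h0] at h1
  have h2 : p * Real.sinh |(p - 2) * (u - v) / 2| ≤ |p - 2| * Real.sinh |p * (u - v) / 2| := by
    calc _ ≤ p * (|p - 2| / p * Real.sinh |p * (u - v) / 2|) := by
          apply mul_le_mul_of_nonneg_left h1 (by linarith)
      _ = _ := by field_simp
  have := mul_le_mul_of_nonneg_left h2 (abs_nonneg (Real.exp (p * (u + v) / 2) * 2))
  nlinarith [this]

/-- two-point sectorial estimate -/
lemma two_point_sector {p : ℝ} (hp : 1 < p) (a b : ℂ) :
    0 ≤ ((a - b) * (starRingEnd ℂ) ((‖a‖ ^ (p - 2)) • a - (‖b‖ ^ (p - 2)) • b)).re ∧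
    2 * Real.sqrt (p - 1) *
      |((a - b) * (starRingEnd ℂ) ((‖a‖ ^ (p - 2)) • a - (‖b‖ ^ (p - 2)) • b)).im| ≤
    |p - 2| * ((a - b) * (starRingEnd ℂ) ((‖a‖ ^ (p - 2)) • a - (‖b‖ ^ (p - 2)) • b)).re := by
  have hsq : ∀ c : ℂ, c.re * c.re + c.im * c.im = ‖c‖ ^ 2 := by
    intro c; rw [← Complex.normSq_eq_norm_sq, Complex.normSq_apply]
  rcases eq_or_ne a 0 with rfl | ha
  · simp
    constructor
    · have h := mul_nonneg (Real.rpow_nonneg (norm_nonneg b) (p - 2)) (sq_nonneg ‖b‖)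
      rw [← hsq] at h; nlinarith
    · have h := mul_nonneg (Real.rpow_nonneg (norm_nonneg b) (p - 2)) (sq_nonneg ‖b‖)
      rw [← hsq] at h
      rw [show -(b.re * (‖b‖ ^ (p - 2) * b.im)) + b.im * (‖b‖ ^ (p - 2) * b.re) = 0 by ring]
      simp
      apply mul_nonneg (abs_nonneg _)
      nlinarith
  rcases eq_or_ne b 0 with rfl | hb
  · simp
    have h := mul_nonneg (Real.rpow_nonneg (norm_nonneg a) (p - 2)) (sq_nonneg ‖a‖)
    rw [← hsq] at h
    constructor
    · nlinarith
    · rw [show -(a.re * (‖a‖ ^ (p - 2) * a.im)) + a.im * (‖a‖ ^ (p - 2) * a.re) = 0 by ring]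
      simp
      apply mul_nonneg (abs_nonneg _)
      nlinarith
  have hr : 0 < ‖a‖ := norm_pos_iff.2 ha
  have hs : 0 < ‖b‖ := norm_pos_iff.2 hb
  have hA : (0:ℝ) < ‖a‖ ^ (p - 2) := Real.rpow_pos_of_pos hr _
  have hB : (0:ℝ) < ‖b‖ ^ (p - 2) := Real.rpow_pos_of_pos hs _
  have key := scalar_ineq hp hr hs
  have p1 : ∀ r : ℝ, 0 < r → r ^ p = r ^ (p - 2) * r ^ 2 := by
    intro r hr
    rw [← Real.rpow_natCast r 2, ← Real.rpow_add hr]; norm_num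
  have p2 : ∀ r : ℝ, 0 < r → r ^ (p - 1) = r ^ (p - 2) * r := by
    intro r hr
    nth_rw 3 [← Real.rpow_one r]
    rw [← Real.rpow_add hr]; congr 1; ring
  rw [p1 _ hr, p1 _ hs, p2 _ hr, p2 _ hs] at key
  have hXY : (a.re * b.re + a.im * b.im) ^ 2 + (a.im * b.re - a.re * b.im) ^ 2
      = (‖a‖ * ‖b‖) ^ 2 := by
    rw [mul_pow, ← hsq, ← hsq]; ring
  have hre : ((a - b) * (starRingEnd ℂ) ((‖a‖ ^ (p - 2)) • a - (‖b‖ ^ (p - 2)) • b)).re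
      = ‖a‖ ^ (p - 2) * ‖a‖ ^ 2 + ‖b‖ ^ (p - 2) * ‖b‖ ^ 2
        - (a.re * b.re + a.im * b.im) * (‖a‖ ^ (p - 2) + ‖b‖ ^ (p - 2)) := by
    rw [← hsq a, ← hsq b]
    simp
    ring
  have him : ((a - b) * (starRingEnd ℂ) ((‖a‖ ^ (p - 2)) • a - (‖b‖ ^ (p - 2)) • b)).im
      = (a.im * b.re - a.re * b.im) * (‖a‖ ^ (p - 2) - ‖b‖ ^ (p - 2)) := by
    simp
    ring
  rw [hre, him]
  generalize a.re * b.re + a.im * b.im = X at *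
  generalize a.im * b.re - a.re * b.im = Y at *
  generalize ‖a‖ ^ (p - 2) = A at *
  generalize ‖b‖ ^ (p - 2) = B at *
  generalize ‖a‖ = r at *
  generalize ‖b‖ = s at *
  clear hre him hsq p1 p2 ha hb
  -- squared key
  have key2 : p ^ 2 * ((r * s) ^ 2 * (A - B) ^ 2) ≤ (p - 2) ^ 2 * (A * r ^ 2 - B * s ^ 2) ^ 2 := by
    have h0 : 0 ≤ p * |A * r * s - B * s * r| := mul_nonneg (by linarith) (abs_nonneg _)
    have := pow_le_pow_left₀ h0 key 2
    rw [mul_pow, mul_pow, sq_abs, sq_abs, sq_abs] at this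
    nlinarith
  have hX : X ≤ r * s := by
    apply le_of_sq_le_sq _ (by positivity)
    nlinarith [sq_nonneg Y]
  have hp2 : (p - 2) ^ 2 ≤ p ^ 2 := by nlinarith
  have hD : (r * s) ^ 2 * (A - B) ^ 2 ≤ (A * r ^ 2 - B * s ^ 2) ^ 2 := by
    have h1 := mul_le_mul_of_nonneg_right hp2 (sq_nonneg (A * r ^ 2 - B * s ^ 2))
    have h2 : (0:ℝ) < p ^ 2 := by positivity
    exact le_of_mul_le_mul_left (key2.trans h1) h2
  have hN0 : r * s * (A + B) ≤ A * r ^ 2 + B * s ^ 2 := by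
    apply le_of_sq_le_sq _ (by positivity)
    nlinarith
  have hN : 0 ≤ A * r ^ 2 + B * s ^ 2 - X * (A + B) := by
    nlinarith
  refine ⟨hN, ?_⟩
  have hq : Real.sqrt (p - 1) ^ 2 = p - 1 := Real.sq_sqrt (by linarith)
  have hfin : |p - 2| * (X * (A + B)) + 2 * Real.sqrt (p - 1) * |Y * (A - B)|
      ≤ |p - 2| * (A * r ^ 2 + B * s ^ 2) := by
    apply le_of_sq_le_sq _ (by positivity)
    rw [abs_mul]
    have c1 : (|p - 2| * (X * (A + B)) + 2 * Real.sqrt (p - 1) * (|Y| * |A - B|)) ^ 2 ≤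
        (X ^ 2 + Y ^ 2) * ((p - 2) ^ 2 * (A + B) ^ 2 + 4 * Real.sqrt (p - 1) ^ 2 * (A - B) ^ 2) := by
      rw [← sq_abs (p - 2), ← sq_abs Y, ← sq_abs (A - B)]
      nlinarith [sq_nonneg (X * (2 * Real.sqrt (p - 1) * |A - B|) - |Y| * (|p - 2| * (A + B)))]
    rw [hXY, hq] at c1
    refine c1.trans ?_
    rw [mul_pow |p - 2|, sq_abs]
    nlinarith
  linarith

lemma half_disc {E : Type*} [NormedAddCommGroup E] [NormedSpace ℂ E] {α φ : ℝ}
    (hα : 1 ≤ α) (hφ : φ = Real.pi - α * Real.pi / 2) {Q : ℂ → E}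
    (hQ : Differentiable ℂ Q) {M L : ℝ} (hM : 0 ≤ M) (hL : 0 ≤ L) (hφ0 : 0 ≤ φ)
    (h1 : ∀ r ψ : ℝ, 0 ≤ r → |ψ| ≤ φ → ‖Q (r * Complex.exp (ψ * Complex.I))‖ ≤ M)
    (h2 : ∀ w, ‖w‖ ≤ 1 → ‖Q w‖ ≤ M * Real.exp L) {z : ℂ} (hz : 0 < z.re) (hz1 : ‖z‖ < 1) :
    ‖Q (-(z ^ (α : ℂ)))‖ ≤ M * Real.exp (3 * L * ‖z‖) := by
  have hα0 : 0 < α := by linarith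
  set U : Set ℂ := {z | 0 < z.re} ∩ Metric.ball 0 1 with hU
  have hUo : IsOpen U := (isOpen_lt continuous_const Complex.continuous_re).inter Metric.isOpen_ball
  have hUb : Bornology.IsBounded U := Metric.isBounded_ball.subset Set.inter_subset_right
  have hUc : closure U ⊆ {z | 0 ≤ z.re} ∩ Metric.closedBall 0 1 := by
    apply closure_minimal
    · rintro x ⟨hx1, hx2⟩
      have hx1' : 0 < x.re := hx1
      exact ⟨hx1'.le, Metric.ball_subset_closedBall hx2⟩
    · exact (isClosed_le continuous_const Complex.continuous_re).inter Metric.isClosed_closedBall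
  set G : ℂ → E := fun z => Complex.exp (-(L : ℂ) * (2 * z - z ^ 2)) • Q (-(z ^ (α : ℂ))) with hG
  have hd : DiffContOnCl ℂ G U := by
    constructor
    · intro x hx
      have hx' : x ∈ Complex.slitPlane := Or.inl hx.1
      have e1 : DifferentiableAt ℂ (fun z : ℂ => -(z ^ (α : ℂ))) x :=
        (differentiableAt_id.cpow (differentiableAt_const _) hx').neg
      have e2 : DifferentiableAt ℂ (fun z : ℂ => Q (-(z ^ (α : ℂ)))) x :=
        (hQ _).comp x e1
      have e3 : DifferentiableAt ℂ (fun z : ℂ => Complex.exp (-(L : ℂ) * (2 * z - z ^ 2))) x := by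
        fun_prop
      exact (e3.smul e2).differentiableWithinAt
    · intro x hx
      have hx' := (hUc hx).1
      have e1 : ContinuousAt (fun z : ℂ => -(z ^ (α : ℂ))) x :=
        (Complex.continuousAt_cpow_const_of_re_pos (Or.inl hx') (by simpa using hα0)).neg
      have e2 : ContinuousAt (fun z : ℂ => Q (-(z ^ (α : ℂ)))) x :=
        ContinuousAt.comp (f := fun z : ℂ => -(z ^ (α : ℂ))) hQ.continuous.continuousAt e1
      have e3 : ContinuousAt (fun z : ℂ => Complex.exp (-(L : ℂ) * (2 * z - z ^ 2))) x := by
        fun_prop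
      exact (e3.smul e2).continuousWithinAt
  have hnorm : ∀ x : ℂ, ‖Complex.exp (-(L : ℂ) * (2 * x - x ^ 2))‖
      = Real.exp (-(L * (2 * x.re - x.re ^ 2 + x.im ^ 2))) := by
    intro x
    rw [Complex.norm_exp]
    congr 1
    simp only [pow_two, Complex.mul_re, Complex.neg_re, Complex.ofReal_re, Complex.sub_re, Complex.neg_im, Complex.ofReal_im, Complex.re_ofNat, Complex.im_ofNat]
    ring
  have hfr : ∀ x ∈ frontier U, ‖G x‖ ≤ M := by
    intro x hx
    rw [frontier, hUo.interior_eq] at hx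
    obtain ⟨hx1, hx2⟩ := hx
    obtain ⟨hre, hno⟩ := hUc hx1
    simp only [Set.mem_ofPred_eq, mem_closedBall_zero_iff] at hre hno
    rw [hG]
    simp only
    rw [norm_smul, hnorm]
    have hsq : x.re ^ 2 + x.im ^ 2 = ‖x‖ ^ 2 := by
      rw [← Complex.normSq_eq_norm_sq, Complex.normSq_apply]; ring
    by_cases hx0 : x.re = 0
    · have hle : Real.exp (-(L * (2 * x.re - x.re ^ 2 + x.im ^ 2))) ≤ 1 := by
        rw [Real.exp_le_one_iff, hx0]
        nlinarith [mul_nonneg hL (sq_nonneg x.im)]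
      have hq : ‖Q (-(x ^ (α : ℂ)))‖ ≤ M := by
        have hxI : x = x.im * Complex.I := by
          apply Complex.ext <;> simp [hx0]
        have key : ∃ r ψ : ℝ, 0 ≤ r ∧ |ψ| ≤ φ ∧
            -(x ^ (α : ℂ)) = r * Complex.exp (ψ * Complex.I) := by
          rcases lt_trichotomy x.im 0 with h | h | h
          · refine ⟨(-x.im) ^ α, φ, Real.rpow_nonneg (by linarith) _, (abs_of_nonneg hφ0).le, ?_⟩
            have hxne : x ≠ 0 := by rintro rfl; simp at h
            have harg : x.arg = -(Real.pi / 2) := by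
              rw [Complex.arg_eq_neg_pi_div_two_iff]; exact ⟨hx0, h⟩
            have hn : ‖x‖ = -x.im := by
              rw [hxI]; simp [abs_of_neg h]
            rw [Complex.cpow_def_of_ne_zero hxne, Complex.log, harg, hn,
              Real.rpow_def_of_pos (by linarith), ← mul_one (-_), ]
            have : (1 : ℂ) = -Complex.exp (Real.pi * Complex.I) := by
              rw [Complex.exp_pi_mul_I]; ring
            rw [this, neg_mul_neg, ← Complex.exp_add, Complex.ofReal_exp, ← Complex.exp_add, hφ]
            congr 1
            push_cast
            ring
          · refine ⟨0, 0, le_rfl, by simpa using hφ0, ?_⟩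
            have : x = 0 := by rw [hxI, h]; simp
            rw [this, Complex.zero_cpow (by exact_mod_cast hα0.ne')]; simp
          · refine ⟨(x.im) ^ α, -φ, by positivity, by rw [abs_neg]; exact (abs_of_nonneg hφ0).le, ?_⟩
            have hxne : x ≠ 0 := by rintro rfl; simp at h
            have harg : x.arg = (Real.pi / 2) := by
              rw [Complex.arg_eq_pi_div_two_iff]; exact ⟨hx0, h⟩
            have hn : ‖x‖ = x.im := by
              rw [hxI]; simp [abs_of_pos h]
            rw [Complex.cpow_def_of_ne_zero hxne, Complex.log, harg, hn,
              Real.rpow_def_of_pos (by linarith), ← mul_one (-_), ]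
            have : (1 : ℂ) = -Complex.exp (-Real.pi * Complex.I) := by
              rw [neg_mul, Complex.exp_neg, Complex.exp_pi_mul_I]; norm_num
            rw [this, neg_mul_neg, ← Complex.exp_add, Complex.ofReal_exp, ← Complex.exp_add, hφ]
            congr 1
            push_cast
            ring
        obtain ⟨r, ψ, hr, hψ, he⟩ := key
        rw [he]
        exact h1 r ψ hr hψ
      calc _ ≤ 1 * M := mul_le_mul hle hq (norm_nonneg _) zero_le_one
        _ = M := one_mul _
    · have hpos : 0 < x.re := lt_of_le_of_ne hre (Ne.symm hx0)
      have hn1 : ‖x‖ = 1 := by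
        by_contra hne
        apply hx2
        exact ⟨hpos, by simpa using lt_of_le_of_ne hno hne⟩
      have hq : ‖Q (-(x ^ (α : ℂ)))‖ ≤ M * Real.exp L := by
        apply h2
        rw [norm_neg, Complex.norm_cpow_real, hn1]; simp
      have hle : Real.exp (-(L * (2 * x.re - x.re ^ 2 + x.im ^ 2))) ≤ Real.exp (-L) := by
        rw [Real.exp_le_exp]
        rw [hn1] at hsq
        have : 1 ≤ 2 * x.re - x.re ^ 2 + x.im ^ 2 := by nlinarith
        nlinarith
      calc _ ≤ Real.exp (-L) * (M * Real.exp L) :=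
            mul_le_mul hle hq (norm_nonneg _) (Real.exp_nonneg _)
        _ = M := by rw [Real.exp_neg]; field_simp
  have hzU : z ∈ closure U := subset_closure ⟨hz, by simpa using hz1⟩
  have := Complex.norm_le_of_forall_mem_frontier_norm_le hUb hd hfr hzU
  rw [hG] at this
  simp only at this
  rw [norm_smul, hnorm, Real.exp_neg] at this
  rw [inv_mul_le_iff₀ (Real.exp_pos _)] at this
  refine this.trans ?_
  rw [mul_comm]
  apply mul_le_mul_of_nonneg_left _ hM
  rw [Real.exp_le_exp]
  have hsq : z.re ^ 2 + z.im ^ 2 = ‖z‖ ^ 2 := by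
    rw [← Complex.normSq_eq_norm_sq, Complex.normSq_apply]; ring
  have hr : z.re ≤ ‖z‖ := Complex.re_le_norm z
  have : 2 * z.re - z.re ^ 2 + z.im ^ 2 ≤ 3 * ‖z‖ := by nlinarith [sq_nonneg z.re, norm_nonneg z]
  nlinarith

lemma corner_bound {E : Type*} [NormedAddCommGroup E] [NormedSpace ℂ E] {α φ : ℝ}
    (hα : 1 ≤ α) (hφ : φ = Real.pi - α * Real.pi / 2) {Q : ℂ → E}
    (hQ : Differentiable ℂ Q) {M L : ℝ} (hM : 0 ≤ M) (hL : 0 ≤ L) (hφ0 : 0 ≤ φ)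
    (h1 : ∀ r ψ : ℝ, 0 ≤ r → |ψ| ≤ φ → ‖Q (r * Complex.exp (ψ * Complex.I))‖ ≤ M)
    (h2 : ∀ w, ‖w‖ ≤ 1 → ‖Q w‖ ≤ M * Real.exp L) {w : ℂ} (hw : ‖w‖ < 1) :
    ‖Q w‖ ≤ M * Real.exp (3 * L * ‖w‖ ^ (1 / α)) := by
  have hα0 : 0 < α := by linarith
  have hwe : w = ‖w‖ * Complex.exp (w.arg * Complex.I) := (Complex.norm_mul_exp_arg_mul_I w).symm
  by_cases harg : |w.arg| ≤ φ
  · have := h1 ‖w‖ w.arg (norm_nonneg _) harg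
    rw [← hwe] at this
    refine this.trans (le_mul_of_one_le_right hM ?_)
    apply Real.one_le_exp
    positivity
  · push Not at harg
    have hw0 : w ≠ 0 := by rintro rfl; simp at harg; linarith
    have hr : 0 < ‖w‖ := norm_pos_iff.2 hw0
    -- polar form of -w
    obtain ⟨ψ, hψ, hψw⟩ : ∃ ψ : ℝ, |ψ| < α * Real.pi / 2 ∧
        -w = ‖w‖ * Complex.exp (ψ * Complex.I) := by
      rcases le_or_gt 0 w.arg with h | h
      · refine ⟨w.arg - Real.pi, ?_, ?_⟩
        · rw [abs_of_nonneg h] at harg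
          have := Complex.arg_le_pi w
          rw [abs_of_nonpos (by linarith)]
          linarith
        · push_cast
          rw [sub_mul, Complex.exp_sub, Complex.exp_pi_mul_I, div_neg, div_one, mul_neg, ← hwe]
      · refine ⟨w.arg + Real.pi, ?_, ?_⟩
        · rw [abs_of_neg h] at harg
          have := Complex.neg_pi_lt_arg w
          rw [abs_of_nonneg (by linarith)]
          linarith
        · push_cast
          rw [add_mul, Complex.exp_add, Complex.exp_pi_mul_I, mul_neg_one, mul_neg, ← hwe]
    have hbd : |ψ / α| < Real.pi / 2 := by
      rw [abs_div, abs_of_pos hα0, div_lt_iff₀ hα0]; linarith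
    rw [abs_lt] at hbd
    set e : ℂ := (Real.log ‖w‖ / α : ℝ) + (ψ / α : ℝ) * Complex.I with he
    have heim : e.im = ψ / α := by rw [he]; simp
    have here : e.re = Real.log ‖w‖ / α := by rw [he]; simp
    set z := Complex.exp e with hz
    have hpi := Real.pi_pos
    have hzre : 0 < z.re := by
      rw [hz, Complex.exp_re, heim]
      exact mul_pos (Real.exp_pos _) (Real.cos_pos_of_mem_Ioo ⟨by linarith, hbd.2⟩)
    have hzn : ‖z‖ = ‖w‖ ^ (1 / α) := by
      rw [hz, Complex.norm_exp, here, Real.rpow_def_of_pos hr]; congr 1; ring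
    have hz1 : ‖z‖ < 1 := by
      rw [hzn]; exact Real.rpow_lt_one hr.le hw (by positivity)
    have hzα : z ^ (α : ℂ) = -w := by
      rw [Complex.cpow_def_of_ne_zero (Complex.exp_ne_zero _),
        Complex.log_exp (by rw [heim]; linarith) (by rw [heim]; linarith), hψw]
      conv_rhs => rw [← Real.exp_log hr, Complex.ofReal_exp, ← Complex.exp_add]
      congr 1
      rw [he]; push_cast
      have : (α : ℂ) ≠ 0 := by exact_mod_cast hα0.ne'
      field_simp
    have := half_disc hα hφ hQ hM hL hφ0 h1 h2 hzre hz1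
    rwa [hzα, neg_neg, hzn] at this

lemma corner_schwarz {E : Type*} [NormedAddCommGroup E] [NormedSpace ℂ E] {α φ : ℝ}
    (hα : 1 ≤ α) (hφ : φ = Real.pi - α * Real.pi / 2) {Q : ℂ → E}
    (hQ : Differentiable ℂ Q) {M K : ℝ} {d : ℕ} (hd : 1 ≤ d)
    (hM : 0 < M) (hK : 0 ≤ K) (hφ0 : 0 ≤ φ)
    (h1 : ∀ r ψ : ℝ, 0 ≤ r → |ψ| ≤ φ → ‖Q (r * Complex.exp (ψ * Complex.I))‖ ≤ M)
    (h2 : ∀ w, ‖w‖ ≤ 1 → ‖Q w‖ ≤ M * Real.exp (d * K)) {s : ℝ} (hs : 0 ≤ s)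
    (hsd : s < (d : ℝ) ^ (-α)) :
    ‖Q s - Q 0‖ ≤ 3 * Real.exp (3 * K) * (s * (d : ℝ) ^ α) * M := by
  have hα0 : 0 < α := by linarith
  have hd1 : (1 : ℝ) ≤ d := by exact_mod_cast hd
  have hd0 : (0 : ℝ) < d := by linarith
  have hR : (0 : ℝ) < (d : ℝ) ^ (-α) := by positivity
  have hR1 : (d : ℝ) ^ (-α) ≤ 1 := Real.rpow_le_one_of_one_le_of_nonpos hd1 (by linarith)
  have hQ0 : ‖Q 0‖ ≤ M := by simpa using h1 0 0 le_rfl (by simpa using hφ0)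
  have hb : ∀ w ∈ Metric.ball (0 : ℂ) ((d : ℝ) ^ (-α)), ‖Q w‖ ≤ M * Real.exp (3 * K) := by
    intro w hw
    simp only [mem_ball_zero_iff] at hw
    have := corner_bound hα hφ hQ hM.le (by positivity : 0 ≤ d * K) hφ0 h1 h2 (hw.trans_le hR1)
    refine this.trans ?_
    apply mul_le_mul_of_nonneg_left _ hM.le
    rw [Real.exp_le_exp]
    have h3 : ‖w‖ ^ (1 / α) ≤ (d : ℝ)⁻¹ := by
      calc ‖w‖ ^ (1 / α) ≤ ((d : ℝ) ^ (-α)) ^ (1 / α) :=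
            Real.rpow_le_rpow (norm_nonneg _) hw.le (by positivity)
        _ = (d : ℝ)⁻¹ := by
            rw [← Real.rpow_mul hd0.le, ← Real.rpow_neg_one]; congr 1; field_simp
    calc 3 * (d * K) * ‖w‖ ^ (1 / α) ≤ 3 * (d * K) * (d : ℝ)⁻¹ :=
          mul_le_mul_of_nonneg_left h3 (by positivity)
      _ = 3 * K := by field_simp
  have hmaps : Set.MapsTo Q (Metric.ball 0 ((d : ℝ) ^ (-α)))
      (Metric.closedBall (Q 0) (3 * M * Real.exp (3 * K))) := by
    intro w hw
    rw [Metric.mem_closedBall, dist_eq_norm]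
    have h5 := hb w hw
    have h6 : 1 ≤ Real.exp (3 * K) := Real.one_le_exp (by positivity)
    have := norm_sub_le (Q w) (Q 0)
    nlinarith
  have hsm : (s : ℂ) ∈ Metric.ball (0 : ℂ) ((d : ℝ) ^ (-α)) := by
    simpa [abs_of_nonneg hs] using hsd
  have := Complex.dist_le_div_mul_dist_of_mapsTo_ball hQ.differentiableOn hmaps hsm
  rw [dist_eq_norm, dist_zero_right, Complex.norm_real, Real.norm_of_nonneg hs] at this
  refine this.trans (le_of_eq ?_)
  rw [Real.rpow_neg hd0.le]
  field_simp

/-- The (complex) noise operator. -/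
def noise {n : ℕ} (z : ℂ) (f : (Fin n → Bool) → ℂ) : (Fin n → Bool) → ℂ :=
  fun x => ∑ A : Finset (Fin n), z ^ A.card * ((walsh A x : ℂ) * coeff f A)

/-- Flip of one coordinate. -/
def flip {n : ℕ} (i : Fin n) (x : Fin n → Bool) : Fin n → Bool := Function.update x i (!(x i))

lemma flip_flip {n : ℕ} (i : Fin n) (x : Fin n → Bool) : flip i (flip i x) = x := by
  unfold flip
  simp

lemma sum_flip {n : ℕ} {Y : Type*} [AddCommMonoid Y] (i : Fin n) (h : (Fin n → Bool) → Y) :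
    ∑ x, h (flip i x) = ∑ x, h x :=
  Equiv.sum_comp (Function.Involutive.toPerm (flip i) (flip_flip i)) h

lemma sgn_sq (b : Bool) : sgn b * sgn b = 1 := by cases b <;> simp [sgn]

lemma sum_prod_cube {n : ℕ} {R : Type*} [CommSemiring R] (g : Fin n → Bool → R) :
    ∑ x : Fin n → Bool, ∏ i, g i (x i) = ∏ i, (g i true + g i false) := by
  have := (Finset.prod_univ_sum (fun _ : Fin n => (Finset.univ : Finset Bool)) g).symm
  rw [Fintype.piFinset_univ] at this
  rw [this]
  simp

lemma noise_kernel {n : ℕ} (z : ℂ) (f : (Fin n → Bool) → ℂ) (x : Fin n → Bool) :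
    noise z f x = ∑ y, (∏ i, (1 + z * (sgn (x i) * sgn (y i) : ℝ)) / 2) * f y := by
  have h : ∀ y : Fin n → Bool, (∏ i, (1 + z * (sgn (x i) * sgn (y i) : ℝ)) / 2)
      = ∑ A : Finset (Fin n), z ^ A.card * ((walsh A x : ℂ) * ((2 ^ n : ℝ)⁻¹ * walsh A y : ℝ)) := by
    intro y
    rw [Finset.prod_div_distrib, Finset.prod_one_add, Finset.powerset_univ, Finset.sum_div]
    apply Finset.sum_congr rfl
    intro A _
    rw [Finset.prod_mul_distrib, Finset.prod_const, Finset.prod_const, Finset.card_univ,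
      Fintype.card_fin]
    simp only [walsh]
    push_cast
    rw [Finset.prod_mul_distrib]
    field_simp
  simp only [h, noise, coeff, Finset.sum_mul]
  rw [Finset.sum_comm]
  apply Finset.sum_congr rfl
  intro A _
  rw [Complex.real_smul, Finset.mul_sum, Finset.mul_sum, Finset.mul_sum]
  apply Finset.sum_congr rfl
  intro y _
  rw [Complex.real_smul]
  push_cast
  ring

lemma noise_one {n : ℕ} (f : (Fin n → Bool) → ℂ) : noise 1 f = f := by
  funext x
  rw [noise_kernel, Finset.sum_eq_single x]
  · simp [sgn_sq]
  · intro y _ hyx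
    obtain ⟨i, hi⟩ := Function.ne_iff.1 hyx
    rw [Finset.prod_eq_zero (Finset.mem_univ i), zero_mul]
    have : sgn (x i) * sgn (y i) = -1 := by
      revert hi
      cases x i <;> cases y i <;> simp [sgn]
    rw [this]; simp
  · simp

lemma walsh_eq {n : ℕ} (A : Finset (Fin n)) (x : Fin n → Bool) :
    walsh A x = ∏ i, if i ∈ A then sgn (x i) else 1 := by
  rw [walsh, Finset.prod_ite_mem, Finset.univ_inter]

lemma coeff_noise {n : ℕ} (z : ℂ) (f : (Fin n → Bool) → ℂ) (A : Finset (Fin n)) :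
    coeff (noise z f) A = z ^ A.card * coeff f A := by
  have h : ∀ y : Fin n → Bool,
      ∑ x : Fin n → Bool, (walsh A x : ℂ) * (∏ i, (1 + z * (sgn (x i) * sgn (y i) : ℝ)) / 2)
        = z ^ A.card * walsh A y := by
    intro y
    have e : ∀ x : Fin n → Bool,
        (walsh A x : ℂ) * (∏ i, (1 + z * (sgn (x i) * sgn (y i) : ℝ)) / 2)
        = ∏ i, (fun (i : Fin n) (b : Bool) => ((if i ∈ A then (sgn b : ℂ) else 1) *
            ((1 + z * (sgn b * sgn (y i) : ℝ)) / 2))) i (x i) := by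
      intro x
      rw [walsh_eq, Complex.ofReal_prod, ← Finset.prod_mul_distrib]
      apply Finset.prod_congr rfl
      intro i _
      by_cases hi : i ∈ A <;> simp [hi]
    rw [Finset.sum_congr rfl (fun x _ => e x), sum_prod_cube (fun (i : Fin n) (b : Bool) => ((if i ∈ A then (sgn b : ℂ) else 1) *
            ((1 + z * (sgn b * sgn (y i) : ℝ)) / 2))), walsh, Complex.ofReal_prod,
      ← Finset.prod_const, ← Finset.prod_mul_distrib, ← Finset.univ_inter A,
      ← Finset.prod_ite_mem, Finset.univ_inter]
    apply Finset.prod_congr rfl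
    intro i _
    by_cases hi : i ∈ A <;> cases y i <;> simp [sgn, hi] <;> ring
  simp only [coeff, Complex.real_smul]
  have h2 : ∑ x, (walsh A x : ℂ) * noise z f x = z ^ A.card * ∑ y, (walsh A y : ℂ) * f y := by
    simp only [noise_kernel, Finset.mul_sum]
    rw [Finset.sum_comm]
    apply Finset.sum_congr rfl
    intro y _
    rw [← mul_assoc (z ^ A.card), ← h y, Finset.sum_mul]
    apply Finset.sum_congr rfl
    intro x _
    ring
  rw [h2]
  ring

lemma walsh_flip {n : ℕ} (A : Finset (Fin n)) (i : Fin n) (x : Fin n → Bool) :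
    walsh A (flip i x) = if i ∈ A then - walsh A x else walsh A x := by
  unfold walsh flip
  split_ifs with h
  · rw [← Finset.mul_prod_erase A _ h, ← Finset.mul_prod_erase A _ h, ← neg_mul]
    congr 1
    · simp; cases x i <;> simp [sgn]
    · apply Finset.prod_congr rfl
      intro j hj
      rw [Function.update_of_ne (Finset.ne_of_mem_erase hj)]
  · apply Finset.prod_congr rfl
    intro j hj
    rw [Function.update_of_ne]
    rintro rfl
    exact h hj

lemma pderiv_flip {n : ℕ} (i : Fin n) (f : (Fin n → Bool) → ℂ) (x : Fin n → Bool) :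
    pderiv i f x = (2 : ℂ)⁻¹ * (f x - f (flip i x)) := by
  rw [pderiv, flip, Complex.real_smul]; push_cast; rfl

lemma sum_pderiv_noise {n : ℕ} (z : ℂ) (f : (Fin n → Bool) → ℂ) (x : Fin n → Bool) :
    ∑ i, pderiv i (noise z f) x
      = ∑ A : Finset (Fin n), (A.card : ℂ) * (z ^ A.card * ((walsh A x : ℂ) * coeff f A)) := by
  have h : ∀ i, pderiv i (noise z f) x = ∑ A : Finset (Fin n), (if i ∈ A then 1 else 0) *
      (z ^ A.card * ((walsh A x : ℂ) * coeff f A)) := by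
    intro i
    rw [pderiv_flip, noise, noise, ← Finset.sum_sub_distrib, Finset.mul_sum]
    apply Finset.sum_congr rfl
    intro A _
    rw [walsh_flip]
    split_ifs
    · push_cast; ring
    · ring
  rw [Finset.sum_congr rfl (fun i _ => h i), Finset.sum_comm]
  apply Finset.sum_congr rfl
  intro A _
  rw [← Finset.sum_mul]
  congr 1
  simp

/-- Energy form estimate. -/
lemma energy_nonneg {n : ℕ} {p : ℝ} (hp : 1 < p) {w : ℂ} (hw0 : 0 ≤ w.re)
    (hw : |p - 2| * |w.im| ≤ 2 * Real.sqrt (p - 1) * w.re) (g : (Fin n → Bool) → ℂ) :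
    0 ≤ ∑ x, (w * (∑ i, pderiv i g x) * (starRingEnd ℂ) (‖g x‖ ^ (p - 2) • g x)).re := by
  have hq : 0 < Real.sqrt (p - 1) := Real.sqrt_pos.2 (by linarith)
  have hZ : ∀ a b : ℂ,
      0 ≤ (w * ((a - b) * (starRingEnd ℂ) ((‖a‖ ^ (p - 2)) • a - (‖b‖ ^ (p - 2)) • b))).re := by
    intro a b
    obtain ⟨h1, h2⟩ := two_point_sector hp a b
    generalize (a - b) * (starRingEnd ℂ) ((‖a‖ ^ (p - 2)) • a - (‖b‖ ^ (p - 2)) • b) = Z at *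
    rw [Complex.mul_re]
    have h3 : w.im * Z.im ≤ |w.im| * |Z.im| := by rw [← abs_mul]; exact le_abs_self _
    have h4 : 2 * Real.sqrt (p - 1) * (|w.im| * |Z.im|) ≤ 2 * Real.sqrt (p - 1) * (w.re * Z.re) := by
      have e1 := mul_le_mul_of_nonneg_left h2 (abs_nonneg w.im)
      have e2 := mul_le_mul_of_nonneg_right hw h1
      nlinarith
    have h5 := le_of_mul_le_mul_left h4 (by positivity)
    linarith
  have hsw : ∑ x, (w * (∑ i, pderiv i g x) * (starRingEnd ℂ) (‖g x‖ ^ (p - 2) • g x)).re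
      = ∑ i, ∑ x, (w * pderiv i g x * (starRingEnd ℂ) (‖g x‖ ^ (p - 2) • g x)).re := by
    rw [Finset.sum_comm]
    apply Finset.sum_congr rfl
    intro x _
    rw [← Complex.re_sum, Finset.mul_sum, Finset.sum_mul]
  rw [hsw]
  apply Finset.sum_nonneg
  intro i _
  have hs := sum_flip i (fun x => (w * pderiv i g x * (starRingEnd ℂ) (‖g x‖ ^ (p - 2) • g x)).re)
  have hpos : 0 ≤ ∑ x, (w * pderiv i g x * (starRingEnd ℂ) (‖g x‖ ^ (p - 2) • g x)).re +
      ∑ x, (w * pderiv i g (flip i x) *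
        (starRingEnd ℂ) (‖g (flip i x)‖ ^ (p - 2) • g (flip i x))).re := by
    rw [← Finset.sum_add_distrib]
    apply Finset.sum_nonneg
    intro x _
    have := hZ (g x) (g (flip i x))
    rw [← Complex.add_re, pderiv_flip, pderiv_flip, flip_flip]
    have e : w * (2⁻¹ * (g x - g (flip i x))) * (starRingEnd ℂ) (‖g x‖ ^ (p - 2) • g x) +
        w * (2⁻¹ * (g (flip i x) - g x)) *
          (starRingEnd ℂ) (‖g (flip i x)‖ ^ (p - 2) • g (flip i x))
        = ((2⁻¹ : ℝ) : ℂ) * (w * ((g x - g (flip i x)) * (starRingEnd ℂ) ((‖g x‖ ^ (p - 2)) • g x -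
            (‖g (flip i x)‖ ^ (p - 2)) • g (flip i x)))) := by
      rw [map_sub]; push_cast; ring
    rw [e, Complex.re_ofReal_mul]
    positivity
  linarith

/-- `L_p` contractivity of the complex-time heat semigroup in a sector. -/
lemma noise_contraction {n : ℕ} {p : ℝ} (hp : 1 < p) {w : ℂ} (hw0 : 0 ≤ w.re)
    (hw : |p - 2| * |w.im| ≤ 2 * Real.sqrt (p - 1) * w.re) (f : (Fin n → Bool) → ℂ) :
    ∑ x, ‖noise (Complex.exp (-w)) f x‖ ^ p ≤ ∑ x, ‖f x‖ ^ p := by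
  have hder : ∀ (x : Fin n → Bool) (s : ℝ),
      HasDerivAt (fun s : ℝ => noise (Complex.exp (-(s * w))) f x)
        (-(w * ∑ i, pderiv i (noise (Complex.exp (-(s * w))) f) x)) s := by
    intro x s
    rw [sum_pderiv_noise, Finset.mul_sum, ← Finset.sum_neg_distrib]
    unfold noise
    apply HasDerivAt.fun_sum
    intro A _
    have h1 : HasDerivAt (fun s : ℝ => -((s : ℂ) * w)) (-(1 * w)) s :=
      ((Complex.ofRealCLM.hasDerivAt (x := s)).mul_const w).neg
    have h2 := ((h1.cexp.pow A.card)).mul_const ((walsh A x : ℂ) * coeff f A)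
    refine h2.congr_deriv ?_
    rcases Nat.eq_zero_or_pos A.card with h | h
    · simp [h]
    · obtain ⟨k, hk⟩ : ∃ k, A.card = k + 1 := ⟨A.card - 1, by omega⟩
      rw [hk]
      simp only [Nat.add_sub_cancel, pow_succ]
      ring
  set N : ℝ → ℝ := fun s => ∑ x, ‖noise (Complex.exp (-(s * w))) f x‖ ^ p with hN
  have hNd : ∀ s : ℝ, HasDerivAt N (∑ x, ((p * ‖noise (Complex.exp (-(s * w))) f x‖ ^ (p - 2)) •
      innerSL ℝ (noise (Complex.exp (-(s * w))) f x))
        (-(w * ∑ i, pderiv i (noise (Complex.exp (-(s * w))) f) x))) s := by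
    intro s
    apply HasDerivAt.fun_sum
    intro x _
    exact (hasFDerivAt_norm_rpow (noise (Complex.exp (-(s * w))) f x) hp).comp_hasDerivAt s (hder x s)
  have hanti : Antitone N := by
    apply antitone_of_deriv_nonpos
    · intro s; exact (hNd s).differentiableAt
    · intro s
      rw [(hNd s).deriv]
      have := energy_nonneg hp hw0 hw (noise (Complex.exp (-(s * w))) f)
      generalize noise (Complex.exp (-(s * w))) f = g at *
      have e : ∀ x, ((p * ‖g x‖ ^ (p - 2)) • innerSL ℝ (g x)) (-(w * ∑ i, pderiv i g x))
          = -p * (w * (∑ i, pderiv i g x) * (starRingEnd ℂ) (‖g x‖ ^ (p - 2) • g x)).re := by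
        intro x
        have : (starRingEnd ℂ) (‖g x‖ ^ (p - 2) • g x)
          = ((‖g x‖ ^ (p - 2) : ℝ) : ℂ) * (starRingEnd ℂ) (g x) := by
            rw [Complex.real_smul, map_mul, Complex.conj_ofReal]
        rw [this, _root_.smul_apply, innerSL_apply_apply, Complex.inner, smul_eq_mul,
          mul_left_comm _ ((‖g x‖ ^ (p - 2) : ℝ) : ℂ) _, Complex.re_ofReal_mul, mul_comm (w * _)]
        rw [neg_mul, Complex.neg_re, mul_comm (starRingEnd ℂ (g x))]
        ring
      rw [Finset.sum_congr rfl (fun x _ => e x), ← Finset.mul_sum]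
      nlinarith
  have h01 := hanti (zero_le_one)
  rw [hN] at h01
  simpa [noise_one] using h01

/-- The function as an element of `PiLp`. -/
abbrev toE {n : ℕ} (p : ℝ) (f : (Fin n → Bool) → ℂ) :
    PiLp (ENNReal.ofReal p) (fun _ : Fin n → Bool => ℂ) := WithLp.toLp (ENNReal.ofReal p) f

lemma norm_toE {n : ℕ} {p : ℝ} (hp : 1 < p) (f : (Fin n → Bool) → ℂ) :
    ‖toE p f‖ = (∑ x, ‖f x‖ ^ p) ^ (1 / p) := by
  have h : (ENNReal.ofReal p).toReal = p := ENNReal.toReal_ofReal (by linarith)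
  rw [PiLp.norm_eq_sum (by rw [h]; linarith), h]

lemma lpNorm_eq {n : ℕ} {p : ℝ} (hp : 1 < p) (f : (Fin n → Bool) → ℂ) :
    lpNorm p f = ((2 ^ n : ℝ)⁻¹) ^ (1 / p) * ‖toE p f‖ := by
  rw [norm_toE hp, lpNorm, Real.mul_rpow (by positivity)]
  exact Finset.sum_nonneg (fun x _ => by positivity)

lemma toE_noise {n : ℕ} (p : ℝ) (z : ℂ) (f : (Fin n → Bool) → ℂ) :
    toE p (noise z f) = ∑ A : Finset (Fin n), z ^ A.card •
      toE p (fun x => (walsh A x : ℂ) * coeff f A) := by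
  ext x
  simp [noise]

lemma toE_contraction {n : ℕ} {p : ℝ} (hp : 1 < p) {w : ℂ} (hw0 : 0 ≤ w.re)
    (hw : |p - 2| * |w.im| ≤ 2 * Real.sqrt (p - 1) * w.re) (f : (Fin n → Bool) → ℂ) :
    ‖toE p (noise (Complex.exp (-w)) f)‖ ≤ ‖toE p f‖ := by
  rw [norm_toE hp, norm_toE hp]
  apply Real.rpow_le_rpow (Finset.sum_nonneg (fun x _ => by positivity))
    (noise_contraction hp hw0 hw f) (by positivity)

lemma disc_bound {n : ℕ} {p : ℝ} (hp : 1 < p) (f : (Fin n → Bool) → ℂ) {d : ℕ}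
    (hf : degLE f d) {w : ℂ} (hw : ‖w‖ ≤ 1) :
    ‖toE p (noise (Complex.exp (-w)) f)‖ ≤
      ‖toE p f‖ * Real.exp (d * (2 + |p - 2| * Real.pi / (2 * Real.sqrt (p - 1)))) := by
  haveI : Fact (1 ≤ ENNReal.ofReal p) := ⟨by
    rw [← ENNReal.ofReal_one]; exact ENNReal.ofReal_le_ofReal hp.le⟩
  have hq : 0 < Real.sqrt (p - 1) := Real.sqrt_pos.2 (by linarith)
  set L : ℝ := 1 + |p - 2| * Real.pi / (2 * Real.sqrt (p - 1)) with hL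
  have hL1 : 1 ≤ L := by
    have : 0 ≤ |p - 2| * Real.pi / (2 * Real.sqrt (p - 1)) := by positivity
    linarith
  set V : Finset (Fin n) → PiLp (ENNReal.ofReal p) (fun _ : Fin n → Bool => ℂ) :=
    fun A => toE p (fun x => (walsh A x : ℂ) * coeff f A) with hV
  set F : ℂ → PiLp (ENNReal.ofReal p) (fun _ : Fin n → Bool => ℂ) :=
    fun z => ∑ A : Finset (Fin n), z ^ (d - A.card) • V A with hF
  have hFz : ∀ z : ℂ, z ≠ 0 → F z = z ^ d • toE p (noise z⁻¹ f) := by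
    intro z hz
    rw [toE_noise, Finset.smul_sum]
    apply Finset.sum_congr rfl
    intro A _
    rw [smul_smul]
    by_cases hA : A.card ≤ d
    · congr 1
      rw [inv_pow, ← div_eq_mul_inv, pow_sub₀ _ hz hA, div_eq_mul_inv]
    · have : V A = 0 := by
        rw [hV]
        ext x
        simp [hf A (by omega)]
      rw [this, smul_zero]
      have h2 : toE p (fun x => (walsh A x : ℂ) * coeff f A) = 0 := this
      rw [h2, smul_zero]
  have hFd : Differentiable ℂ F := by
    rw [hF]
    fun_prop
  have hbd : ∀ z ∈ frontier (Metric.ball (0 : ℂ) (Real.exp L)),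
      ‖F z‖ ≤ Real.exp L ^ d * ‖toE p f‖ := by
    intro z hz
    rw [frontier_ball _ (Real.exp_pos L).ne'] at hz
    have hz' : ‖z‖ = Real.exp L := by simpa using hz
    have hz0 : z ≠ 0 := by
      intro h; rw [h, norm_zero] at hz'; exact (Real.exp_pos L).ne hz'
    rw [hFz z hz0, norm_smul, norm_pow, hz']
    gcongr
    have e : z⁻¹ = Complex.exp (-(Complex.log z)) := by
      rw [Complex.exp_neg, Complex.exp_log hz0]
    rw [e]
    have hre : (Complex.log z).re = L := by rw [Complex.log_re, hz', Real.log_exp]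
    apply toE_contraction hp
    · rw [hre]; linarith
    · rw [hre, Complex.log_im]
      calc |p - 2| * |z.arg| ≤ |p - 2| * Real.pi := by
            gcongr; exact Complex.abs_arg_le_pi z
        _ = 2 * Real.sqrt (p - 1) * (|p - 2| * Real.pi / (2 * Real.sqrt (p - 1))) := by
            field_simp
        _ ≤ _ := by
            rw [hL]; gcongr; linarith
  have hwre := (abs_le.1 ((Complex.abs_re_le_norm w).trans hw))
  have hzn : ‖Complex.exp w‖ = Real.exp w.re := Complex.norm_exp w
  have hmax : ‖F (Complex.exp w)‖ ≤ Real.exp L ^ d * ‖toE p f‖ := by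
    apply Complex.norm_le_of_forall_mem_frontier_norm_le Metric.isBounded_ball
      hFd.diffContOnCl hbd
    rw [closure_ball _ (Real.exp_pos L).ne']
    simp only [Metric.mem_closedBall, dist_zero_right, hzn]
    exact Real.exp_le_exp.2 (by linarith)
  rw [hFz _ (Complex.exp_ne_zero w), norm_smul, norm_pow, hzn, ← Complex.exp_neg] at hmax
  have h3 : Real.exp (-1) ^ d * ‖toE p (noise (Complex.exp (-w)) f)‖ ≤
      Real.exp L ^ d * ‖toE p f‖ := by
    refine le_trans ?_ hmax
    gcongr
    linarith
  have h4 : Real.exp 1 ^ d * Real.exp (-1) ^ d = 1 := by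
    rw [← mul_pow, ← Real.exp_add]; simp
  have h5 : Real.exp (d * (1 + L)) = Real.exp 1 ^ d * Real.exp L ^ d := by
    rw [← mul_pow, ← Real.exp_add, ← Real.exp_nat_mul]
  have h6 : (2 + |p - 2| * Real.pi / (2 * Real.sqrt (p - 1))) = 1 + L := by rw [hL]; ring
  rw [h6, h5]
  calc _ = Real.exp 1 ^ d * (Real.exp (-1) ^ d * ‖toE p (noise (Complex.exp (-w)) f)‖) := by
        rw [← mul_assoc, h4, one_mul]
    _ ≤ Real.exp 1 ^ d * (Real.exp L ^ d * ‖toE p f‖) := by gcongr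
    _ = _ := by ring

lemma sin_cos_facts {p φ : ℝ} (hp : 1 < p)
    (hφ : φ = Real.arcsin (2 * Real.sqrt (p - 1) / p)) :
    0 < φ ∧ φ ≤ Real.pi / 2 ∧ Real.sin φ = 2 * Real.sqrt (p - 1) / p ∧
      Real.cos φ = |p - 2| / p := by
  have hq : 0 < Real.sqrt (p - 1) := Real.sqrt_pos.2 (by linarith)
  have hsq : Real.sqrt (p - 1) ^ 2 = p - 1 := Real.sq_sqrt (by linarith)
  have hp0 : 0 < p := by linarith
  have h1 : 2 * Real.sqrt (p - 1) / p ≤ 1 := by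
    rw [div_le_one hp0]; nlinarith [sq_nonneg (Real.sqrt (p - 1) - 1)]
  have h0 : 0 < 2 * Real.sqrt (p - 1) / p := by positivity
  refine ⟨by rw [hφ]; exact Real.arcsin_pos.2 h0, by rw [hφ]; exact Real.arcsin_le_pi_div_two _,
    by rw [hφ]; exact Real.sin_arcsin (by linarith) h1, ?_⟩
  rw [hφ, Real.cos_arcsin, ← Real.sqrt_sq (show 0 ≤ |p - 2| / p by positivity)]
  congr 1
  rw [div_pow, div_pow, sq_abs, mul_pow, hsq]
  field_simp
  ring

lemma decay {n : ℕ} {p α φ : ℝ} (hp : 1 < p)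
    (hφ : φ = Real.arcsin (2 * Real.sqrt (p - 1) / p)) (hα : φ = Real.pi - α * Real.pi / 2)
    (f : (Fin n → Bool) → ℂ) {d : ℕ} (hd : 1 ≤ d) (hf : degLE f d) {s : ℝ} (hs : 0 ≤ s)
    (hsd : s < (d : ℝ) ^ (-α)) :
    ‖toE p (noise (Complex.exp (-s)) f) - toE p f‖ ≤
      3 * Real.exp (3 * (2 + |p - 2| * Real.pi / (2 * Real.sqrt (p - 1)))) *
        (s * (d : ℝ) ^ α) * ‖toE p f‖ := by
  haveI : Fact (1 ≤ ENNReal.ofReal p) := ⟨by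
    rw [← ENNReal.ofReal_one]; exact ENNReal.ofReal_le_ofReal hp.le⟩
  obtain ⟨h0, h1, h2, h3⟩ := sin_cos_facts hp hφ
  have hα1 : 1 ≤ α := by
    have := Real.pi_pos
    by_contra hc
    push Not at hc
    nlinarith
  rcases (norm_nonneg (toE p f)).eq_or_lt with hM | hM
  · have hz : toE p f = 0 := norm_eq_zero.1 hM.symm
    have : ∀ x, f x = 0 := fun x => by
      have := congrArg (fun g => g.ofLp x) hz
      simpa using this
    have hf0 : f = 0 := funext this
    have hn : noise (Complex.exp (-s)) f = 0 := by
      funext x; rw [noise_kernel]; simp [hf0]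
    rw [hn, hf0]
    simp
  have key := corner_schwarz (α := α) (φ := φ) hα1 hα
    (Q := fun w => toE p (noise (Complex.exp (-w)) f)) (M := ‖toE p f‖)
    (K := 2 + |p - 2| * Real.pi / (2 * Real.sqrt (p - 1))) (d := d) ?_ hd hM (by positivity)
    h0.le ?_ ?_ hs hsd
  · simpa [noise_one] using key
  · simp only [toE_noise]
    fun_prop
  · intro r ψ hr hψ
    have hp0 : 0 < p := by linarith
    have hre : ((r : ℂ) * Complex.exp (ψ * Complex.I)).re = r * Real.cos ψ := by
      rw [Complex.re_ofReal_mul, Complex.exp_ofReal_mul_I_re]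
    have him : ((r : ℂ) * Complex.exp (ψ * Complex.I)).im = r * Real.sin ψ := by
      rw [Complex.im_ofReal_mul, Complex.exp_ofReal_mul_I_im]
    have hψ' := abs_le.1 hψ
    apply toE_contraction hp
    · rw [hre]
      exact mul_nonneg hr (Real.cos_nonneg_of_neg_pi_div_two_le_of_le (by linarith) (by linarith))
    · rw [hre, him, abs_mul, abs_of_nonneg hr]
      have e1 : |p - 2| = p * Real.cos φ := by rw [h3]; field_simp
      have e2 : 2 * Real.sqrt (p - 1) = p * Real.sin φ := by rw [h2]; field_simp
      have e3 : |Real.sin ψ| = Real.sin |ψ| := by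
        rcases le_total 0 ψ with h | h
        · rw [abs_of_nonneg h, abs_of_nonneg (Real.sin_nonneg_of_nonneg_of_le_pi h (by linarith))]
        · rw [abs_of_nonpos h, Real.sin_neg,
            abs_of_nonpos (Real.sin_nonpos_of_nonpos_of_neg_pi_le h (by linarith))]
      have e4 : 0 ≤ Real.sin (φ - |ψ|) :=
        Real.sin_nonneg_of_nonneg_of_le_pi (by linarith) (by linarith [abs_nonneg ψ])
      rw [Real.sin_sub, Real.cos_abs] at e4
      rw [e1, e2, e3]
      have := mul_nonneg (mul_nonneg hp0.le hr) e4
      nlinarith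
  · intro w hw
    exact disc_bound hp f hf hw

/-- Real noise kernel. -/
def ker {n : ℕ} (a : ℝ) (x y : Fin n → Bool) : ℝ :=
  ∏ i, (1 + a * (sgn (x i) * sgn (y i))) / 2

/-- The logarithmic derivative of the kernel. -/
def eta {n : ℕ} (a : ℝ) (x y : Fin n → Bool) (i : Fin n) : ℝ :=
  a * (sgn (x i) * sgn (y i)) / (1 + a * (sgn (x i) * sgn (y i)))

lemma one_add_pos {a : ℝ} (h0 : 0 < a) (h1 : a < 1) (b c : Bool) :
    0 < 1 + a * (sgn b * sgn c) := by
  cases b <;> cases c <;> simp [sgn] <;> linarith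

lemma ker_nonneg {n : ℕ} {a : ℝ} (h0 : 0 < a) (h1 : a < 1) (x y : Fin n → Bool) :
    0 ≤ ker a x y :=
  Finset.prod_nonneg (fun i _ => by have := one_add_pos h0 h1 (x i) (y i); positivity)

lemma ker_symm {n : ℕ} (a : ℝ) (x y : Fin n → Bool) : ker a x y = ker a y x := by
  unfold ker
  apply Finset.prod_congr rfl
  intro i _
  rw [mul_comm (sgn (x i))]

lemma sum_ker {n : ℕ} (a : ℝ) (x : Fin n → Bool) : ∑ y, ker a x y = 1 := by
  unfold ker
  rw [sum_prod_cube (fun i b => (1 + a * (sgn (x i) * sgn b)) / 2)]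
  apply Finset.prod_eq_one
  intro i _
  simp [sgn]
  ring

lemma pderiv_noise_eq {n : ℕ} {a : ℝ} (h0 : 0 < a) (h1 : a < 1) (f : (Fin n → Bool) → ℂ)
    (i : Fin n) (x : Fin n → Bool) :
    pderiv i (noise (a : ℂ) f) x = ∑ y, ((ker a x y * eta a x y i : ℝ) : ℂ) * f y := by
  have hk : ∀ x, noise (a : ℂ) f x = ∑ y, ((ker a x y : ℝ) : ℂ) * f y := by
    intro x
    rw [noise_kernel]
    apply Finset.sum_congr rfl
    intro y _
    unfold ker
    push_cast
    rfl
  rw [pderiv_flip, hk, hk, ← Finset.sum_sub_distrib, Finset.mul_sum]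
  apply Finset.sum_congr rfl
  intro y _
  rw [← sub_mul, ← mul_assoc]
  congr 1
  have : (2 : ℝ)⁻¹ * (ker a x y - ker a (flip i x) y) = ker a x y * eta a x y i := by
    unfold ker eta
    rw [← Finset.mul_prod_erase Finset.univ _ (Finset.mem_univ i),
      ← Finset.mul_prod_erase Finset.univ _ (Finset.mem_univ i)]
    have e : ∏ j ∈ Finset.univ.erase i, (1 + a * (sgn (flip i x j) * sgn (y j))) / 2
        = ∏ j ∈ Finset.univ.erase i, (1 + a * (sgn (x j) * sgn (y j))) / 2 := by
      apply Finset.prod_congr rfl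
      intro j hj
      rw [flip, Function.update_of_ne (Finset.ne_of_mem_erase hj)]
    have e2 : sgn (flip i x i) = - sgn (x i) := by
      unfold flip; simp; cases x i <;> simp [sgn]
    rw [e, e2]
    have := one_add_pos h0 h1 (x i) (y i)
    generalize ∏ j ∈ Finset.univ.erase i, (1 + a * (sgn (x j) * sgn (y j))) / 2 = P
    rw [neg_mul]
    generalize sgn (x i) * sgn (y i) = u at *
    field_simp
    ring
  rw [← this]
  push_cast
  ring

lemma exp_le_quad {x : ℝ} (hx : |x| ≤ 1) : Real.exp x ≤ 1 + x + x ^ 2 := by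
  have := Real.abs_exp_sub_one_sub_id_le hx
  linarith [abs_le.1 this]

lemma one_step {a c : ℝ} (h0 : 0 < a) (h1 : a < 1) (hc : |c| ≤ 1) :
    (1 + a) / 2 * Real.exp ((1 - a) * (c * (a / (1 + a)))) +
      (1 - a) / 2 * Real.exp ((1 - a) * (c * (-a / (1 - a)))) ≤ 1 + (1 - a) * c ^ 2 := by
  have h2 : 0 < 1 - a := by linarith
  have hc2 : c ^ 2 ≤ 1 := (sq_le_one_iff_abs_le_one c).2 hc
  have e1 : |(1 - a) * (c * (a / (1 + a)))| ≤ 1 := by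
    rw [abs_mul, abs_mul, abs_of_pos h2, abs_of_pos (show 0 < a / (1 + a) by positivity)]
    have : a / (1 + a) ≤ 1 := by rw [div_le_one (by linarith)]; linarith
    have h3 : |c| * (a / (1 + a)) ≤ 1 := mul_le_one₀ hc (by positivity) this
    have h4 : 0 ≤ |c| * (a / (1 + a)) := by positivity
    nlinarith
  have e2' : (1 - a) * (c * (-a / (1 - a))) = -(c * a) := by field_simp
  have e2 : |-(c * a)| ≤ 1 := by
    rw [abs_neg, abs_mul, abs_of_pos h0]
    exact mul_le_one₀ hc h0.le h1.le
  rw [e2']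
  have f1 := exp_le_quad e1
  have f2 := exp_le_quad e2
  calc _ ≤ (1 + a) / 2 * (1 + (1 - a) * (c * (a / (1 + a))) + ((1 - a) * (c * (a / (1 + a)))) ^ 2)
        + (1 - a) / 2 * (1 + -(c * a) + (-(c * a)) ^ 2) := by gcongr
    _ = 1 + (1 - a) * c ^ 2 * (a ^ 2 / (1 + a)) := by field_simp; ring
    _ ≤ 1 + (1 - a) * c ^ 2 * 1 := by
        gcongr
        rw [div_le_one (by linarith)]; nlinarith
    _ = _ := by ring

lemma exp_moment {n : ℕ} {a : ℝ} (h0 : 0 < a) (h1 : a < 1) (x : Fin n → Bool) (c : Fin n → ℝ)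
    (hc : ∑ i, c i ^ 2 ≤ 1) :
    ∑ y, ker a x y * Real.exp ((1 - a) * ∑ i, c i * eta a x y i) ≤ 1 + 2 * (1 - a) := by
  have h2 : 0 < 1 - a := by linarith
  have e : ∀ y, ker a x y * Real.exp ((1 - a) * ∑ i, c i * eta a x y i)
      = ∏ i, (fun (i : Fin n) (b : Bool) => (1 + a * (sgn (x i) * sgn b)) / 2 *
        Real.exp ((1 - a) * (c i * (a * (sgn (x i) * sgn b) / (1 + a * (sgn (x i) * sgn b))))))
          i (y i) := by
    intro y
    rw [Finset.prod_mul_distrib, ← Real.exp_sum, Finset.mul_sum]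
    rfl
  rw [Finset.sum_congr rfl (fun y _ => e y), sum_prod_cube (fun (i : Fin n) (b : Bool) =>
    (1 + a * (sgn (x i) * sgn b)) / 2 *
        Real.exp ((1 - a) * (c i * (a * (sgn (x i) * sgn b) / (1 + a * (sgn (x i) * sgn b))))))]
  have hci : ∀ i, |c i| ≤ 1 := by
    intro i
    rw [← sq_le_one_iff_abs_le_one]
    exact (Finset.single_le_sum (f := fun i => c i ^ 2) (fun i _ => sq_nonneg _)
      (Finset.mem_univ i)).trans hc
  calc _ ≤ ∏ i, Real.exp ((1 - a) * c i ^ 2) := by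
        apply Finset.prod_le_prod
        · intro i _
          have := one_add_pos h0 h1 (x i) true
          have := one_add_pos h0 h1 (x i) false
          positivity
        · intro i _
          have := one_step h0 h1 (hci i)
          have h3 := Real.add_one_le_exp ((1 - a) * c i ^ 2)
          refine le_trans (le_of_eq ?_) (this.trans (by linarith))
          cases x i <;> simp [sgn, sub_eq_add_neg] <;> ring
    _ = Real.exp ((1 - a) * ∑ i, c i ^ 2) := by rw [← Real.exp_sum, Finset.mul_sum]
    _ ≤ Real.exp (1 - a) := Real.exp_le_exp.2 (by nlinarith)
    _ ≤ 1 + (1 - a) + (1 - a) ^ 2 := exp_le_quad (by rw [abs_of_pos h2]; linarith)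
    _ ≤ _ := by nlinarith

lemma pow_le_cosh {q : ℝ} (hq : 2 ≤ q) : ∃ C : ℝ, 0 < C ∧ ∀ x : ℝ,
    |x| ^ q ≤ C * (Real.exp x + Real.exp (-x) - 2) := by
  have key : ∀ (m : ℕ), 2 ≤ m → ∀ y : ℝ, 0 ≤ y →
      y ^ m ≤ (m.factorial : ℝ) * (Real.exp y + Real.exp (-y) - 2) := by
    intro m hm y hy
    have h1 := Real.sum_le_exp_of_nonneg hy (m + 1)
    have h2 := Real.add_one_le_exp (-y)
    have h3 : 1 + y + y ^ m / m.factorial ≤ ∑ i ∈ Finset.range (m + 1), y ^ i / i.factorial := by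
      rw [Finset.sum_range_succ]
      gcongr
      calc 1 + y = ∑ i ∈ Finset.range 2, y ^ i / (i.factorial : ℝ) := by
            simp [Finset.sum_range_succ]
        _ ≤ _ := Finset.sum_le_sum_of_subset_of_nonneg (Finset.range_mono hm)
            (fun i _ _ => by positivity)
    have h4 : y ^ m / m.factorial ≤ Real.exp y + Real.exp (-y) - 2 := by linarith
    rwa [div_le_iff₀' (by positivity)] at h4
  refine ⟨2 + (⌈q⌉₊.factorial : ℝ), by positivity, ?_⟩
  intro x
  have hm : 2 ≤ ⌈q⌉₊ := by
    have := Nat.le_ceil q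
    exact_mod_cast hq.trans this
  have hsym : Real.exp x + Real.exp (-x) = Real.exp |x| + Real.exp (-|x|) := by
    rcases abs_cases x with ⟨h, _⟩ | ⟨h, _⟩ <;> rw [h]
    rw [neg_neg, add_comm]
  rw [hsym]
  have k1 := key 2 le_rfl |x| (abs_nonneg x)
  have k2 := key _ hm |x| (abs_nonneg x)
  have hy := abs_nonneg x
  generalize |x| = y at *
  have : y ^ q ≤ y ^ 2 + y ^ ⌈q⌉₊ := by
    rcases le_total y 1 with h | h
    · have : y ^ q ≤ y ^ (2 : ℝ) := by
        rcases hy.eq_or_lt with h0 | h0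
        · rw [← h0, Real.zero_rpow (by linarith), Real.zero_rpow (by norm_num)]
        · exact Real.rpow_le_rpow_of_exponent_ge h0 h hq
      rw [Real.rpow_two] at this
      have : 0 ≤ y ^ ⌈q⌉₊ := by positivity
      linarith
    · have : y ^ q ≤ y ^ ((⌈q⌉₊ : ℕ) : ℝ) := Real.rpow_le_rpow_of_exponent_le h (Nat.le_ceil q)
      rw [Real.rpow_natCast] at this
      have : 0 ≤ y ^ 2 := by positivity
      linarith
  norm_num at k1
  linarith

lemma real_moment {q : ℝ} (hq : 2 ≤ q) : ∃ C : ℝ, 0 < C ∧ ∀ (n : ℕ) (a : ℝ), 0 < a → a < 1 →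
    ∀ (x : Fin n → Bool) (c : Fin n → ℝ), ∑ i, c i ^ 2 ≤ 1 →
    ∑ y, ker a x y * |∑ i, c i * eta a x y i| ^ q ≤ C * (1 - a) ^ (1 - q) := by
  obtain ⟨C, hC, h⟩ := pow_le_cosh hq
  refine ⟨C * 4, by positivity, ?_⟩
  intro n a h0 h1 x c hc
  have h2 : 0 < 1 - a := by linarith
  have m1 := exp_moment h0 h1 x c hc
  have m2 := exp_moment h0 h1 x (fun i => - c i) (by simpa using hc)
  have key : ∑ y, ker a x y * |(1 - a) * ∑ i, c i * eta a x y i| ^ q ≤ C * (4 * (1 - a)) := by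
    calc _ ≤ ∑ y, ker a x y * (C * (Real.exp ((1 - a) * ∑ i, c i * eta a x y i) +
            Real.exp (-((1 - a) * ∑ i, c i * eta a x y i)) - 2)) := by
          apply Finset.sum_le_sum
          intro y _
          exact mul_le_mul_of_nonneg_left (h _) (ker_nonneg h0 h1 x y)
      _ = C * (∑ y, ker a x y * Real.exp ((1 - a) * ∑ i, c i * eta a x y i) +
            ∑ y, ker a x y * Real.exp ((1 - a) * ∑ i, (- c i) * eta a x y i) -
            2 * ∑ y, ker a x y) := by
          rw [Finset.mul_sum, ← Finset.sum_add_distrib, ← Finset.sum_sub_distrib, Finset.mul_sum]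
          apply Finset.sum_congr rfl
          intro y _
          have : ∑ i, (- c i) * eta a x y i = - ∑ i, c i * eta a x y i := by
            rw [← Finset.sum_neg_distrib]; simp
          rw [this, mul_neg]
          ring
      _ ≤ _ := by
          rw [sum_ker]
          gcongr
          linarith
  have e : ∀ y, ker a x y * |(1 - a) * ∑ i, c i * eta a x y i| ^ q
      = (1 - a) ^ q * (ker a x y * |∑ i, c i * eta a x y i| ^ q) := by
    intro y
    rw [abs_mul, abs_of_pos h2, Real.mul_rpow h2.le (abs_nonneg _)]
    ring
  rw [Finset.sum_congr rfl (fun y _ => e y), ← Finset.mul_sum] at key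
  have hpos : 0 < (1 - a) ^ q := Real.rpow_pos_of_pos h2 q
  rw [Real.rpow_sub h2, Real.rpow_one, ← mul_div_assoc, le_div_iff₀' hpos]
  linarith

lemma complex_moment {q : ℝ} (hq : 2 ≤ q) : ∃ C : ℝ, 0 < C ∧ ∀ (n : ℕ) (a : ℝ), 0 < a → a < 1 →
    ∀ (x : Fin n → Bool) (c : Fin n → ℂ), ∑ i, ‖c i‖ ^ 2 ≤ 1 →
    ∑ y, ker a x y * ‖∑ i, c i * eta a x y i‖ ^ q ≤ C * (1 - a) ^ (1 - q) := by
  obtain ⟨C, hC, h⟩ := real_moment hq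
  refine ⟨2 ^ q * (2 * C), by positivity, ?_⟩
  intro n a h0 h1 x c hc
  have hr : ∑ i, (c i).re ^ 2 ≤ 1 := by
    refine le_trans (Finset.sum_le_sum fun i _ => ?_) hc
    rw [Complex.sq_norm, Complex.normSq_apply]; nlinarith
  have hi : ∑ i, (c i).im ^ 2 ≤ 1 := by
    refine le_trans (Finset.sum_le_sum fun i _ => ?_) hc
    rw [Complex.sq_norm, Complex.normSq_apply]; nlinarith
  have m1 := h n a h0 h1 x _ hr
  have m2 := h n a h0 h1 x _ hi
  have hb : ∀ z : ℂ, ‖z‖ ^ q ≤ 2 ^ q * (|z.re| ^ q + |z.im| ^ q) := by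
    intro z
    have h3 := Complex.norm_le_abs_re_add_abs_im z
    have h4 : ‖z‖ ≤ 2 * max |z.re| |z.im| := by
      linarith [le_max_left |z.re| |z.im|, le_max_right |z.re| |z.im|]
    calc ‖z‖ ^ q ≤ (2 * max |z.re| |z.im|) ^ q :=
          Real.rpow_le_rpow (norm_nonneg _) h4 (by linarith)
      _ = 2 ^ q * (max |z.re| |z.im|) ^ q := Real.mul_rpow (by norm_num) (by positivity)
      _ ≤ _ := by
          gcongr
          have a1 : 0 ≤ |z.re| ^ q := by positivity
          have a2 : 0 ≤ |z.im| ^ q := by positivity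
          rcases max_cases |z.re| |z.im| with ⟨h, _⟩ | ⟨h, _⟩ <;> rw [h] <;> linarith
  calc _ ≤ ∑ y, ker a x y * (2 ^ q * (|∑ i, (c i).re * eta a x y i| ^ q +
        |∑ i, (c i).im * eta a x y i| ^ q)) := by
        apply Finset.sum_le_sum
        intro y _
        apply mul_le_mul_of_nonneg_left _ (ker_nonneg h0 h1 x y)
        have := hb (∑ i, c i * eta a x y i)
        simpa [Complex.re_sum, Complex.im_sum] using this
    _ = 2 ^ q * (∑ y, ker a x y * |∑ i, (c i).re * eta a x y i| ^ q +
          ∑ y, ker a x y * |∑ i, (c i).im * eta a x y i| ^ q) := by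
        rw [← Finset.sum_add_distrib, Finset.mul_sum]
        apply Finset.sum_congr rfl
        intro y _
        ring
    _ ≤ 2 ^ q * (C * (1 - a) ^ (1 - q) + C * (1 - a) ^ (1 - q)) := by gcongr
    _ = _ := by ring

lemma grad_pointwise {r : ℝ} (hr1 : 1 < r) (hr2 : r ≤ 2) : ∃ B : ℝ, 0 < B ∧
    ∀ (n : ℕ) (a : ℝ), 0 < a → a < 1 → ∀ (f : (Fin n → Bool) → ℂ) (x : Fin n → Bool),
    Real.sqrt (∑ i, ‖pderiv i (noise (a : ℂ) f) x‖ ^ 2) ≤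
      B * (1 - a) ^ (-(1 / r)) * (∑ y, ker a x y * ‖f y‖ ^ r) ^ (1 / r) := by
  set q : ℝ := r / (r - 1) with hqdef
  have hr0 : 0 < r - 1 := by linarith
  have hq2 : 2 ≤ q := by rw [hqdef, le_div_iff₀ hr0]; linarith
  have hconj : r.HolderConjugate q := Real.HolderConjugate.conjExponent hr1
  obtain ⟨D, hD, hmom⟩ := complex_moment hq2
  refine ⟨D ^ (1 / q), by positivity, ?_⟩
  intro n a h0 h1 f x
  have ht : 0 < 1 - a := by linarith
  have hq0 : 0 < q := by linarith
  have hr00 : 0 < r := by linarith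
  set v : Fin n → ℂ := fun i => pderiv i (noise (a : ℂ) f) x with hv
  set N : ℝ := Real.sqrt (∑ i, ‖v i‖ ^ 2) with hN
  have hN2 : N ^ 2 = ∑ i, ‖v i‖ ^ 2 :=
    Real.sq_sqrt (Finset.sum_nonneg fun i _ => by positivity)
  have hF0 : 0 ≤ ∑ y, ker a x y * ‖f y‖ ^ r :=
    Finset.sum_nonneg fun y _ => mul_nonneg (ker_nonneg h0 h1 x y) (by positivity)
  change N ≤ _
  rcases (Real.sqrt_nonneg (∑ i, ‖v i‖ ^ 2)).eq_or_lt with hz | hNpos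
  · rw [hN, ← hz]; positivity
  change 0 < N at hNpos
  set c : Fin n → ℂ := fun i => (starRingEnd ℂ) (v i) / N with hc
  have hc1 : ∑ i, ‖c i‖ ^ 2 ≤ 1 := by
    have : ∀ i, ‖c i‖ ^ 2 = ‖v i‖ ^ 2 / N ^ 2 := by
      intro i
      rw [hc]
      simp [div_pow]
    rw [Finset.sum_congr rfl (fun i _ => this i), ← Finset.sum_div, ← hN2,
      div_self (by positivity)]
  have hm := hmom n a h0 h1 x c hc1
  have hid : (N : ℂ) = ∑ y, (ker a x y : ℂ) * f y * (∑ i, c i * eta a x y i) := by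
    have e1 : (N : ℂ) = ∑ i, c i * v i := by
      have : ∀ i, c i * v i = ((‖v i‖ ^ 2 / N : ℝ) : ℂ) := by
        intro i
        rw [hc]
        simp only
        rw [div_mul_eq_mul_div, mul_comm, Complex.mul_conj, Complex.normSq_eq_norm_sq]
        push_cast
        rfl
      rw [Finset.sum_congr rfl (fun i _ => this i), ← Complex.ofReal_sum, ← Finset.sum_div, ← hN2]
      congr 1
      field_simp
    rw [e1]
    simp only [hv, pderiv_noise_eq h0 h1, Finset.mul_sum]
    rw [Finset.sum_comm]
    apply Finset.sum_congr rfl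
    intro y _
    apply Finset.sum_congr rfl
    intro i _
    push_cast
    ring
  set S : (Fin n → Bool) → ℝ := fun y => ‖∑ i, c i * eta a x y i‖ with hS
  have hle : N ≤ ∑ y, (ker a x y ^ (1 / r) * ‖f y‖) * (ker a x y ^ (1 / q) * S y) := by
    have : N = ‖(N : ℂ)‖ := by rw [Complex.norm_real, Real.norm_of_nonneg hNpos.le]
    rw [this, hid]
    refine (norm_sum_le _ _).trans (Finset.sum_le_sum fun y _ => ?_)
    have hk := ker_nonneg h0 h1 x y
    have e : ker a x y ^ (1 / r) * ker a x y ^ (1 / q) = ker a x y := by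
      have hs : 1 / r + 1 / q = 1 := by
        have := hconj.inv_add_inv_eq_one
        simpa using this
      rw [← Real.rpow_add_of_nonneg hk (by positivity) (by positivity), hs, Real.rpow_one]
    rw [norm_mul, norm_mul, Complex.norm_real, Real.norm_of_nonneg hk]
    apply le_of_eq
    calc _ = ker a x y * ‖f y‖ * S y := rfl
      _ = (ker a x y ^ (1 / r) * ker a x y ^ (1 / q)) * ‖f y‖ * S y := by rw [e]
      _ = _ := by ring
  have hH := Real.inner_le_Lp_mul_Lq_of_nonneg (Finset.univ : Finset (Fin n → Bool)) hconj
    (f := fun y => ker a x y ^ (1 / r) * ‖f y‖) (g := fun y => ker a x y ^ (1 / q) * S y)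
    (fun y _ => mul_nonneg (Real.rpow_nonneg (ker_nonneg h0 h1 x y) _) (norm_nonneg _))
    (fun y _ => mul_nonneg (Real.rpow_nonneg (ker_nonneg h0 h1 x y) _) (norm_nonneg _))
  have g1 : ∑ y, (ker a x y ^ (1 / r) * ‖f y‖) ^ r = ∑ y, ker a x y * ‖f y‖ ^ r := by
    apply Finset.sum_congr rfl
    intro y _
    have hk := ker_nonneg h0 h1 x y
    rw [Real.mul_rpow (Real.rpow_nonneg hk _) (norm_nonneg _), ← Real.rpow_mul hk,
      one_div_mul_cancel hr00.ne', Real.rpow_one]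
  have g2 : ∑ y, (ker a x y ^ (1 / q) * S y) ^ q = ∑ y, ker a x y * S y ^ q := by
    apply Finset.sum_congr rfl
    intro y _
    have hk := ker_nonneg h0 h1 x y
    rw [Real.mul_rpow (Real.rpow_nonneg hk _) (norm_nonneg _), ← Real.rpow_mul hk,
      one_div_mul_cancel hq0.ne', Real.rpow_one]
  rw [g1, g2] at hH
  have g3 : (∑ y, ker a x y * S y ^ q) ^ (1 / q) ≤ D ^ (1 / q) * (1 - a) ^ (-(1 / r)) := by
    calc _ ≤ (D * (1 - a) ^ (1 - q)) ^ (1 / q) := by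
          apply Real.rpow_le_rpow _ hm (by positivity)
          exact Finset.sum_nonneg fun y _ =>
            mul_nonneg (ker_nonneg h0 h1 x y) (Real.rpow_nonneg (norm_nonneg _) _)
      _ = _ := by
          rw [Real.mul_rpow hD.le (by positivity), ← Real.rpow_mul ht.le]
          congr 2
          rw [hqdef]
          field_simp
          ring
  calc N ≤ _ := hle.trans hH
    _ ≤ (∑ y, ker a x y * ‖f y‖ ^ r) ^ (1 / r) * (D ^ (1 / q) * (1 - a) ^ (-(1 / r))) := by
        gcongr
    _ = _ := by ring

lemma grad_noise {p r : ℝ} (hr1 : 1 < r) (hr2 : r ≤ 2) (hrp : r ≤ p) : ∃ B : ℝ, 0 < B ∧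
    ∀ (n : ℕ) (a : ℝ), 0 < a → a < 1 → ∀ (f : (Fin n → Bool) → ℂ),
    gradLpNorm p (noise (a : ℂ) f) ≤ B * (1 - a) ^ (-(1 / r)) * lpNorm p f := by
  obtain ⟨B, hB, h⟩ := grad_pointwise hr1 hr2
  refine ⟨B, hB, ?_⟩
  intro n a h0 h1 f
  have ht : 0 < 1 - a := by linarith
  have hp0 : 0 < p := by linarith
  have hr0 : 0 < r := by linarith
  set T : ℝ := B * (1 - a) ^ (-(1 / r)) with hT
  have hT0 : 0 ≤ T := by positivity
  have hpt : ∀ x, ‖Real.sqrt (∑ i, ‖pderiv i (noise (a : ℂ) f) x‖ ^ 2)‖ ^ p ≤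
      T ^ p * ∑ y, ker a x y * ‖f y‖ ^ p := by
    intro x
    have hF0 : 0 ≤ ∑ y, ker a x y * ‖f y‖ ^ r :=
      Finset.sum_nonneg fun y _ => mul_nonneg (ker_nonneg h0 h1 x y) (by positivity)
    rw [Real.norm_of_nonneg (Real.sqrt_nonneg _)]
    calc _ ≤ (T * (∑ y, ker a x y * ‖f y‖ ^ r) ^ (1 / r)) ^ p :=
          Real.rpow_le_rpow (Real.sqrt_nonneg _) (h n a h0 h1 f x) hp0.le
      _ = T ^ p * (∑ y, ker a x y * ‖f y‖ ^ r) ^ (p / r) := by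
          rw [Real.mul_rpow hT0 (by positivity), ← Real.rpow_mul hF0]
          congr 2
          ring
      _ ≤ _ := by
          gcongr
          have := Real.rpow_arith_mean_le_arith_mean_rpow Finset.univ (fun y => ker a x y)
            (fun y => ‖f y‖ ^ r) (fun y _ => ker_nonneg h0 h1 x y) (sum_ker a x)
            (fun y _ => by positivity) (p := p / r) (by rw [le_div_iff₀ hr0]; linarith)
          refine this.trans (le_of_eq ?_)
          apply Finset.sum_congr rfl
          intro y _
          rw [← Real.rpow_mul (norm_nonneg _)]
          congr 2
          field_simp
  have hsum : ∑ x, ‖Real.sqrt (∑ i, ‖pderiv i (noise (a : ℂ) f) x‖ ^ 2)‖ ^ p ≤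
      T ^ p * ∑ y, ‖f y‖ ^ p := by
    calc _ ≤ ∑ x, T ^ p * ∑ y, ker a x y * ‖f y‖ ^ p := Finset.sum_le_sum fun x _ => hpt x
      _ = _ := by
        rw [← Finset.mul_sum, Finset.sum_comm]
        congr 1
        apply Finset.sum_congr rfl
        intro y _
        rw [← Finset.sum_mul]
        simp only [ker_symm a _ y]
        rw [sum_ker, one_mul]
  have hS0 : 0 ≤ ∑ y, ‖f y‖ ^ p := Finset.sum_nonneg fun y _ => by positivity
  unfold gradLpNorm lpNorm
  calc _ ≤ (T ^ p * ((2 ^ n : ℝ)⁻¹ * ∑ y, ‖f y‖ ^ p)) ^ (1 / p) := by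
        apply Real.rpow_le_rpow
        · exact mul_nonneg (by positivity) (Finset.sum_nonneg fun y _ => by positivity)
        · calc _ ≤ (2 ^ n : ℝ)⁻¹ * (T ^ p * ∑ y, ‖f y‖ ^ p) := by gcongr
            _ = _ := by ring
        · positivity
    _ = _ := by
        rw [Real.mul_rpow (by positivity) (by positivity), ← Real.rpow_mul hT0,
          mul_one_div_cancel hp0.ne', Real.rpow_one]

lemma grad_add_pt {n : ℕ} (f g : (Fin n → Bool) → ℂ) (x : Fin n → Bool) :
    Real.sqrt (∑ i, ‖pderiv i (fun y => f y + g y) x‖ ^ 2) ≤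
      Real.sqrt (∑ i, ‖pderiv i f x‖ ^ 2) + Real.sqrt (∑ i, ‖pderiv i g x‖ ^ 2) := by
  have h := norm_add_le (WithLp.toLp 2 (fun i => pderiv i f x) : EuclideanSpace ℂ (Fin n))
    (WithLp.toLp 2 (fun i => pderiv i g x))
  rw [EuclideanSpace.norm_eq, EuclideanSpace.norm_eq, EuclideanSpace.norm_eq] at h
  refine le_trans (le_of_eq ?_) h
  congr 1
  apply Finset.sum_congr rfl
  intro i _
  simp only [PiLp.add_apply, pderiv_flip]
  congr 2
  ring

lemma grad_add {n : ℕ} {p : ℝ} (hp : 1 < p) (f g : (Fin n → Bool) → ℂ) :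
    gradLpNorm p (fun y => f y + g y) ≤ gradLpNorm p f + gradLpNorm p g := by
  unfold gradLpNorm lpNorm
  have hs : ∀ h : (Fin n → Bool) → ℝ, 0 ≤ ∑ x, ‖h x‖ ^ p :=
    fun h => Finset.sum_nonneg fun x _ => by positivity
  rw [Real.mul_rpow (by positivity) (hs _), Real.mul_rpow (by positivity) (hs _),
    Real.mul_rpow (by positivity) (hs _), ← mul_add]
  gcongr
  simp only [Real.norm_of_nonneg (Real.sqrt_nonneg _)]
  refine le_trans ?_ (Real.Lp_add_le_of_nonneg Finset.univ hp.le
    (fun x _ => Real.sqrt_nonneg _) (fun x _ => Real.sqrt_nonneg _))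
  apply Real.rpow_le_rpow (Finset.sum_nonneg fun x _ => by positivity) _ (by positivity)
  apply Finset.sum_le_sum
  intro x _
  exact Real.rpow_le_rpow (Real.sqrt_nonneg _) (grad_add_pt f g x) (by linarith)

lemma grad_crude (n : ℕ) {p : ℝ} (hp : 1 < p) : ∃ G : ℝ, 0 ≤ G ∧
    ∀ f : (Fin n → Bool) → ℂ, gradLpNorm p f ≤ G * lpNorm p f := by
  have : Fact (1 ≤ ENNReal.ofReal p) := ⟨by
    rw [← ENNReal.ofReal_one]; exact ENNReal.ofReal_le_ofReal hp.le⟩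
  have hp0 : 0 < p := by linarith
  refine ⟨Real.sqrt n * (2 ^ n : ℝ) ^ (1 / p), by positivity, ?_⟩
  intro f
  have e : (2 ^ n : ℝ) ^ (1 / p) * lpNorm p f = ‖toE p f‖ := by
    rw [lpNorm_eq hp, ← mul_assoc, ← Real.mul_rpow (by positivity) (by positivity),
      mul_inv_cancel₀ (by positivity), Real.one_rpow, one_mul]
  rw [mul_assoc, e]
  set M := ‖toE p f‖ with hM
  have hM0 : 0 ≤ M := norm_nonneg _
  have hle : ∀ x, ‖f x‖ ≤ M := by
    intro x
    rw [hM, norm_toE hp]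
    have : ‖f x‖ = (‖f x‖ ^ p) ^ (1 / p) := by
      rw [← Real.rpow_mul (norm_nonneg _), mul_one_div_cancel hp0.ne', Real.rpow_one]
    rw [this]
    apply Real.rpow_le_rpow (by positivity) _ (by positivity)
    exact Finset.single_le_sum (f := fun x => ‖f x‖ ^ p) (fun x _ => by positivity)
      (Finset.mem_univ x)
  have hpt : ∀ x, Real.sqrt (∑ i, ‖pderiv i f x‖ ^ 2) ≤ Real.sqrt n * M := by
    intro x
    rw [← Real.sqrt_sq hM0, ← Real.sqrt_mul (by positivity)]
    apply Real.sqrt_le_sqrt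
    calc _ ≤ ∑ _i : Fin n, M ^ 2 := by
          apply Finset.sum_le_sum
          intro i _
          have : ‖pderiv i f x‖ ≤ M := by
            rw [pderiv_flip, norm_mul]
            have := norm_sub_le (f x) (f (flip i x))
            have := hle x
            have := hle (flip i x)
            norm_num
            linarith
          gcongr
      _ = _ := by simp
  have hR : 0 ≤ Real.sqrt n * M := by positivity
  unfold gradLpNorm lpNorm
  calc _ ≤ ((Real.sqrt n * M) ^ p) ^ (1 / p) := by
        apply Real.rpow_le_rpow
        · exact mul_nonneg (by positivity) (Finset.sum_nonneg fun y _ => by positivity)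
        · calc _ ≤ (2 ^ n : ℝ)⁻¹ * ∑ _x : Fin n → Bool, (Real.sqrt n * M) ^ p := by
                gcongr with x
                rw [Real.norm_of_nonneg (Real.sqrt_nonneg _)]
                exact hpt x
            _ = _ := by
                simp
        · positivity
    _ = _ := by
        rw [← Real.rpow_mul hR, mul_one_div_cancel hp0.ne', Real.rpow_one]

lemma coeff_sub_noise {n : ℕ} (z : ℂ) (f : (Fin n → Bool) → ℂ) {d : ℕ} (hf : degLE f d) :
    degLE (fun x => f x - noise z f x) d := by
  intro A hA
  have h1 : coeff (fun x => f x - noise z f x) A = coeff f A - coeff (noise z f) A := by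
    unfold coeff
    rw [← smul_sub, ← Finset.sum_sub_distrib]
    simp only [smul_sub]
  rw [h1, coeff_noise, hf A hA]
  simp

lemma grad_main {p r α φ : ℝ} (hp : 1 < p) (hr1 : 1 < r) (hr2 : r ≤ 2) (hrp : r ≤ p)
    (hφ : φ = Real.arcsin (2 * Real.sqrt (p - 1) / p)) (hα : φ = Real.pi - α * Real.pi / 2) :
    ∃ C : ℝ, 0 < C ∧ ∀ (n d : ℕ), 1 ≤ d → ∀ f : (Fin n → Bool) → ℂ, degLE f d →
      gradLpNorm p f ≤ C * (d : ℝ) ^ (α / r) * lpNorm p f := by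
  have : Fact (1 ≤ ENNReal.ofReal p) := ⟨by
    rw [← ENNReal.ofReal_one]; exact ENNReal.ofReal_le_ofReal hp.le⟩
  obtain ⟨B, hB, hgn⟩ := grad_noise hr1 hr2 hrp
  set E : ℝ := Real.exp (3 * (2 + |p - 2| * Real.pi / (2 * Real.sqrt (p - 1)))) with hE
  have hE1 : 1 ≤ E := Real.one_le_exp (by positivity)
  set c : ℝ := 1 / (6 * E) with hc
  have hc0 : 0 < c := by positivity
  have hc1 : c ≤ 1 / 6 := by
    rw [hc]; apply one_div_le_one_div_of_le <;> linarith
  have hr0 : 0 < r := by linarith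
  have hα0 : 0 ≤ α := by
    have h1 := (sin_cos_facts hp hφ).2.1
    have := Real.pi_pos
    by_contra hcc
    push Not at hcc
    nlinarith
  refine ⟨2 * (B * (c / 2) ^ (-(1 / r))), by positivity, ?_⟩
  intro n d hd
  have hd0 : (0 : ℝ) < d := by exact_mod_cast hd
  have hd1 : (1 : ℝ) ≤ d := by exact_mod_cast hd
  have hdp : 0 < (d : ℝ) ^ (-α) := Real.rpow_pos_of_pos hd0 _
  have hdle : (d : ℝ) ^ (-α) ≤ 1 := Real.rpow_le_one_of_one_le_of_nonpos hd1 (by linarith)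
  set s : ℝ := c * (d : ℝ) ^ (-α) with hs
  have hs0 : 0 < s := by positivity
  have hs1 : s ≤ 1 / 6 := by nlinarith
  have hsd : s < (d : ℝ) ^ (-α) := by nlinarith
  have hsα : s * (d : ℝ) ^ α = c := by
    rw [hs, mul_assoc, ← Real.rpow_add hd0]; simp
  set a : ℝ := Real.exp (-s) with ha
  have ha0 : 0 < a := Real.exp_pos _
  have ha1 : a < 1 := by rw [ha, Real.exp_lt_one_iff]; linarith
  have hat : s / 2 ≤ 1 - a := by
    have := exp_le_quad (x := -s) (by rw [abs_neg, abs_of_pos hs0]; linarith)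
    nlinarith
  set T : ℝ := B * (1 - a) ^ (-(1 / r)) with hT
  have hT0 : 0 ≤ T := by
    have : 0 < 1 - a := by linarith
    positivity
  have hTle : T ≤ B * (c / 2) ^ (-(1 / r)) * (d : ℝ) ^ (α / r) := by
    rw [hT, mul_assoc]
    gcongr
    calc (1 - a) ^ (-(1 / r)) ≤ (s / 2) ^ (-(1 / r)) := by
          apply Real.rpow_le_rpow_of_nonpos (by positivity) hat
          have : 0 < 1 / r := by positivity
          linarith
      _ = (c / 2 * (d : ℝ) ^ (-α)) ^ (-(1 / r)) := by rw [hs]; congr 1; ring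
      _ = _ := by
          rw [Real.mul_rpow (by positivity) (by positivity), ← Real.rpow_mul hd0.le]
          congr 2
          ring
  obtain ⟨G, hG0, hG⟩ := grad_crude n hp
  have hL0 : ∀ g : (Fin n → Bool) → ℂ, 0 ≤ lpNorm p g := by
    intro g; rw [lpNorm_eq hp]; positivity
  have hhalf : ∀ f : (Fin n → Bool) → ℂ, degLE f d →
      lpNorm p (fun x => f x - noise (a : ℂ) f x) ≤ 1 / 2 * lpNorm p f := by
    intro f hf
    have := decay hp hφ hα f hd hf hs0.le hsd
    have ea : Complex.exp (-(s : ℂ)) = (a : ℂ) := by rw [ha]; push_cast; rfl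
    rw [ea, hsα, ← hE] at this
    have e2 : 3 * E * c = 1 / 2 := by rw [hc]; field_simp; norm_num
    rw [e2, norm_sub_rev] at this
    rw [lpNorm_eq hp, lpNorm_eq hp]
    have e3 : toE p (fun x => f x - noise (a : ℂ) f x) = toE p f - toE p (noise (a : ℂ) f) := rfl
    rw [e3]
    calc _ ≤ ((2 ^ n : ℝ)⁻¹) ^ (1 / p) * (1 / 2 * ‖toE p f‖) := by gcongr
      _ = _ := by ring
  have hind : ∀ k : ℕ, ∀ f : (Fin n → Bool) → ℂ, degLE f d →
      gradLpNorm p f ≤ (2 * T + G * (1 / 2) ^ k) * lpNorm p f := by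
    intro k
    induction k with
    | zero =>
      intro f _
      have := hG f
      have := mul_nonneg hT0 (hL0 f)
      nlinarith
    | succ k ih =>
      intro f hf
      have h1 := grad_add hp (noise (a : ℂ) f) (fun x => f x - noise (a : ℂ) f x)
      have e : (fun y => noise (a : ℂ) f y + (f y - noise (a : ℂ) f y)) = f := by
        funext y; ring
      rw [e] at h1
      have h2 := hgn n a ha0 ha1 f
      have h3 := ih _ (coeff_sub_noise (a : ℂ) f hf)
      have h4 := hhalf f hf
      have h5 : 0 ≤ 2 * T + G * (1 / 2) ^ k := by positivity
      have h6 := mul_le_mul_of_nonneg_left h4 h5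
      rw [pow_succ]
      calc _ ≤ T * lpNorm p f + (2 * T + G * (1 / 2) ^ k) * (1 / 2 * lpNorm p f) := by linarith
        _ = _ := by ring
  intro f hf
  have hlim : Filter.Tendsto (fun k : ℕ => (2 * T + G * (1 / 2 : ℝ) ^ k) * lpNorm p f)
      Filter.atTop (nhds ((2 * T + G * 0) * lpNorm p f)) :=
    (((tendsto_pow_atTop_nhds_zero_of_lt_one (by norm_num) (by norm_num)).const_mul G).const_add
      (2 * T)).mul_const _
  have hfin := ge_of_tendsto' hlim (fun k => hind k f hf)
  refine hfin.trans ?_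
  apply mul_le_mul_of_nonneg_right _ (hL0 f)
  linarith

lemma lpNorm_nonneg' {n : ℕ} (p : ℝ) (f : (Fin n → Bool) → ℂ) : 0 ≤ lpNorm p f :=
  Real.rpow_nonneg (mul_nonneg (by positivity) (Finset.sum_nonneg fun x _ => by positivity)) _

/-- **Bernstein–Markov inequality for the scalar discrete gradient.** -/
theorem stmt14 (p : ℝ) (hp1 : 1 < p) (θ : ℝ)
    (hθ : θ = 2 * Real.arcsin (2 * Real.sqrt (p - 1) / p)) :
    ∃ C : ℝ, 0 < C ∧
      ∀ n d : ℕ, 1 ≤ d → d ≤ n → ∀ f : (Fin n → Bool) → ℂ, degLE f d →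
        (p < 2 →
          gradLpNorm p f ≤
            C * (d : ℝ) ^ (2 / p - θ / (p * Real.pi)) * Real.log (d + 1) * lpNorm p f) ∧
        (2 ≤ p →
          gradLpNorm p f ≤ C * (d : ℝ) ^ (1 - θ / (2 * Real.pi)) * lpNorm p f) := by
  have hpi := Real.pi_pos
  have hp0 : 0 < p := by linarith
  have hr1 : 1 < min p 2 := lt_min hp1 (by norm_num)
  obtain ⟨C, hC, h⟩ := grad_main (p := p) (r := min p 2) (α := 2 - θ / Real.pi) hp1 hr1
    (min_le_right _ _) (min_le_left _ _) (φ := θ / 2) (by rw [hθ]; ring) (by field_simp; ring)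
  have hl2 : 0 < Real.log 2 := Real.log_pos (by norm_num)
  refine ⟨C * (1 + 1 / Real.log 2), by positivity, ?_⟩
  intro n d hd _ f hf
  have hb := h n d hd f hf
  have hL := lpNorm_nonneg' p f
  constructor
  · intro hp2
    rw [min_eq_left hp2.le] at hb
    have e : (2 - θ / Real.pi) / p = 2 / p - θ / (p * Real.pi) := by field_simp
    rw [e] at hb
    refine hb.trans (mul_le_mul_of_nonneg_right ?_ hL)
    have hd1 : (1 : ℝ) ≤ d := by exact_mod_cast hd
    have hlog : Real.log 2 ≤ Real.log (d + 1) := Real.log_le_log (by norm_num) (by linarith)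
    have h1 : 1 ≤ (1 + 1 / Real.log 2) * Real.log (d + 1) := by
      calc (1 : ℝ) = 1 / Real.log 2 * Real.log 2 := by field_simp
        _ ≤ 1 / Real.log 2 * Real.log (d + 1) := by gcongr
        _ ≤ _ := by
          apply mul_le_mul_of_nonneg_right (by linarith) (by linarith)
    have h2 : 0 ≤ C * (d : ℝ) ^ (2 / p - θ / (p * Real.pi)) := by positivity
    nlinarith
  · intro hp2
    rw [min_eq_right hp2] at hb
    have e : (2 - θ / Real.pi) / 2 = 1 - θ / (2 * Real.pi) := by field_simp
    rw [e] at hb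
    refine hb.trans (mul_le_mul_of_nonneg_right ?_ hL)
    have h2 : 0 ≤ C * (d : ℝ) ^ (1 - θ / (2 * Real.pi)) := by positivity
    have h3 : 0 ≤ 1 / Real.log 2 := by positivity
    nlinarith

end HammingCube
end
end

section
/- For every p ∈ (1, 4/3) there exists a constant K_p ∈ (0,∞) such that for every n,d ∈ ℕ with 1 ≤ d ≤ n and every function f : {-1,1}^n → ℂ of degree at most d, Inf^{(p)} f ≤ K_p · d^{2 − (1/π)·arcsin(2√(p−1)/p)} · ‖f‖_{L_∞}^p. -/
open scoped BigOperators ENNReal NNReal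

noncomputable section

namespace HammingCube

variable {X : Type*} [NormedAddCommGroup X] [NormedSpace ℂ X]

theorem poly_cont_bound (q : Polynomial ℂ) (d : ℕ) (hq : q.natDegree ≤ d) (z : ℂ) (R : ℝ)
    (hR : 1 ≤ R) (hz : ‖z‖ ≤ R) :
    ‖q.eval z‖ ≤ (∑ k ∈ Finset.range (d + 1), ‖q.coeff k‖) * R ^ d := by
  rw [Polynomial.eval_eq_sum_range' (Nat.lt_succ_of_le hq), Finset.sum_mul]
  refine (norm_sum_le _ _).trans (Finset.sum_le_sum fun k hk => ?_)
  rw [norm_mul, norm_pow]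
  refine mul_le_mul_of_nonneg_left ?_ (norm_nonneg _)
  calc ‖z‖ ^ k ≤ R ^ k := pow_le_pow_left₀ (norm_nonneg _) hz k
    _ ≤ R ^ d := pow_le_pow_right₀ hR (by have := Finset.mem_range.1 hk; omega)

theorem norm_cosh_le (z : ℂ) : ‖Complex.cosh z‖ ≤ Real.exp |z.re| := by
  have h1 : ‖Complex.exp z‖ ≤ Real.exp |z.re| := by
    rw [Complex.norm_exp]; exact Real.exp_le_exp.2 (le_abs_self _)
  have h2 : ‖Complex.exp (-z)‖ ≤ Real.exp |z.re| := by
    rw [Complex.norm_exp]; exact Real.exp_le_exp.2 (by simpa using neg_le_abs z.re)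
  rw [Complex.cosh, norm_div]
  have := norm_add_le (Complex.exp z) (Complex.exp (-z))
  simp only [Complex.norm_ofNat]
  linarith

theorem cosh_growth (q : Polynomial ℂ) (d : ℕ) (hq : q.natDegree ≤ d) (M : ℝ)
    (h : ∀ s : ℝ, |s| ≤ 1 → ‖q.eval (s : ℂ)‖ ≤ M) (z : ℂ) (hz : 0 ≤ z.re) :
    ‖q.eval (Complex.cosh z)‖ ≤ M * Real.exp (d * z.re) := by
  set F : ℂ → ℂ := fun z => q.eval (Complex.cosh z) * Complex.exp (-d * z) with hF
  have hdiff : Differentiable ℂ F := by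
    intro z
    refine DifferentiableAt.mul ?_ (by fun_prop)
    exact (q.differentiable _).comp z Complex.differentiable_cosh.differentiableAt
  have hb : ∀ z : ℂ, 0 ≤ z.re → ‖F z‖ ≤ ∑ k ∈ Finset.range (d + 1), ‖q.coeff k‖ := by
    intro z hz
    have h1 := poly_cont_bound q d hq (Complex.cosh z) (Real.exp |z.re|)
      (Real.one_le_exp (abs_nonneg _)) (norm_cosh_le z)
    rw [abs_of_nonneg hz] at h1
    have h2 : ‖Complex.exp (-d * z)‖ = Real.exp (-(d * z.re)) := by
      rw [Complex.norm_exp]; simp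
    rw [hF]; simp only [norm_mul]
    rw [h2]
    refine (mul_le_mul_of_nonneg_right h1 (Real.exp_pos _).le).trans (le_of_eq ?_)
    rw [mul_assoc, ← Real.exp_nat_mul, ← Real.exp_add]; simp
  have key : ‖F z‖ ≤ M := by
    refine PhragmenLindelof.right_half_plane_of_bounded_on_real hdiff.diffContOnCl
      ⟨1, by norm_num, 0, ?_⟩ ?_ ?_ hz
    · refine Asymptotics.IsBigO.of_bound (∑ k ∈ Finset.range (d + 1), ‖q.coeff k‖) ?_
      refine Filter.eventually_inf_principal.2 (Filter.Eventually.of_forall fun w hw => ?_)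
      simpa using hb w (le_of_lt hw)
    · refine ⟨∑ k ∈ Finset.range (d + 1), ‖q.coeff k‖, ?_⟩
      rw [Filter.eventually_map]
      filter_upwards [Filter.eventually_ge_atTop 0] with x hx
      exact hb x (by simpa using hx)
    · intro x
      have h1 : ‖Complex.exp (-d * (x * Complex.I))‖ = 1 := by
        rw [Complex.norm_exp]; simp
      rw [hF]; simp only [norm_mul]
      rw [h1, mul_one, Complex.cosh_mul_I, ← Complex.ofReal_cos]
      exact h _ (Real.abs_cos_le_one x)
  have h2 : ‖Complex.exp (-d * z)‖ = Real.exp (-(d * z.re)) := by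
    rw [Complex.norm_exp]; simp
  rw [hF] at key; simp only [norm_mul] at key
  rw [h2, Real.exp_neg, ← div_eq_mul_inv, div_le_iff₀ (Real.exp_pos _)] at key
  exact key

theorem bernstein_ineq (q : Polynomial ℂ) (d : ℕ) (hd : 1 ≤ d) (hq : q.natDegree ≤ d) (M : ℝ)
    (h : ∀ s : ℝ, |s| ≤ 1 → ‖q.eval (s : ℂ)‖ ≤ M) (x : ℝ) (hx : |x| ≤ 1) :
    ‖q.derivative.eval (x : ℂ)‖ * √(1 - x ^ 2) ≤ Real.exp 1 * d * M := by
  have hd0 : (0 : ℝ) < d := by exact_mod_cast hd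
  have hM : 0 ≤ M := (norm_nonneg _).trans (h 0 (by simp))
  have hall : ∀ z : ℂ, ‖q.eval (Complex.cosh z)‖ ≤ M * Real.exp (d * |z.re|) := by
    intro z
    rcases le_total 0 z.re with hz | hz
    · rw [abs_of_nonneg hz]; exact cosh_growth q d hq M h z hz
    · rw [abs_of_nonpos hz]
      have := cosh_growth q d hq M h (-z) (by simpa using hz)
      simpa using this
  set z0 : ℂ := Real.arccos x * Complex.I with hz0
  have hcosh : Complex.cosh z0 = x := by
    rw [hz0, Complex.cosh_mul_I, ← Complex.ofReal_cos, Real.cos_arccos (by linarith [(abs_le.1 hx).1]) (abs_le.1 hx).2]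
  have hder : HasDerivAt (fun z => q.eval (Complex.cosh z))
      (q.derivative.eval (Complex.cosh z0) * Complex.sinh z0) z0 :=
    (q.hasDerivAt _).comp z0 (Complex.hasDerivAt_cosh z0)
  have hsinh : ‖Complex.sinh z0‖ = √(1 - x ^ 2) := by
    rw [hz0, Complex.sinh_mul_I, ← Complex.ofReal_sin, Real.sin_arccos]
    simp [abs_of_nonneg (Real.sqrt_nonneg _)]
  have hdiff : Differentiable ℂ (fun z => q.eval (Complex.cosh z)) := fun z =>
    (q.differentiable _).comp z Complex.differentiable_cosh.differentiableAt
  have hc := Complex.norm_deriv_le_of_forall_mem_sphere_norm_le (c := z0) (R := 1 / d)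
    (C := M * Real.exp 1) (f := fun z => q.eval (Complex.cosh z)) (by positivity)
    hdiff.diffContOnCl (by
      intro z hz
      refine (hall z).trans (mul_le_mul_of_nonneg_left (Real.exp_le_exp.2 ?_) hM)
      have h1 : |z.re| ≤ 1 / d := by
        have : (z - z0).re = z.re := by simp [hz0]
        rw [← this]
        refine (Complex.abs_re_le_norm _).trans (le_of_eq ?_)
        simpa [dist_eq_norm] using hz
      calc (d : ℝ) * |z.re| ≤ d * (1 / d) := by gcongr
        _ = 1 := by field_simp)
  rw [hder.deriv, norm_mul, hsinh, hcosh] at hc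
  refine hc.trans (le_of_eq ?_)
  field_simp

theorem cpow_real_im_axis (α : ℝ) (hα : 0 < α) (y : ℝ) (hy : 0 ≤ y) (σ : ℝ) (hσ : σ = 1 ∨ σ = -1) :
    (((σ * y : ℝ) : ℂ) * Complex.I) ^ (α : ℂ)
      = ((y ^ α : ℝ) : ℂ) * Complex.exp (σ * (Real.pi * α / 2 : ℝ) * Complex.I) := by
  rcases hy.eq_or_lt with rfl | hy
  · simp [Real.zero_rpow hα.ne', hα.ne']
  have h1 : (((σ * y : ℝ) : ℂ) * Complex.I)
      = Complex.exp ((Real.log y : ℝ) + (σ * (Real.pi / 2) : ℝ) * Complex.I) := by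
    rw [Complex.exp_add, ← Complex.ofReal_exp, Real.exp_log hy]
    rcases hσ with rfl | rfl
    · simp [Complex.exp_pi_div_two_mul_I]
    · have : Complex.exp (-(Real.pi / 2 * Complex.I)) = -Complex.I := by
        rw [Complex.exp_neg, Complex.exp_pi_div_two_mul_I, Complex.inv_I]
      simp [this]
  have him : ((Real.log y : ℝ) + (σ * (Real.pi / 2) : ℝ) * Complex.I : ℂ).im = σ * (Real.pi / 2) := by
    simp only [Complex.add_im, Complex.ofReal_im, Complex.mul_im, Complex.ofReal_re, Complex.I_re,
      Complex.I_im]; ring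
  have hpi := Real.pi_pos
  rw [h1, Complex.cpow_def_of_ne_zero (Complex.exp_ne_zero _), Complex.log_exp
    (by rw [him]; rcases hσ with rfl | rfl <;> linarith)
    (by rw [him]; rcases hσ with rfl | rfl <;> linarith), Real.rpow_def_of_pos hy,
    Complex.ofReal_exp, ← Complex.exp_add]
  congr 1
  push_cast
  ring

theorem cpow_ne_one (α : ℝ) (h1 : 1 < α) (h2 : α < 2) (W : ℂ) (hW : 0 ≤ W.re) (hne : W ≠ 1) :
    W ^ (α : ℂ) ≠ 1 := by
  intro h
  apply hne
  have hpi := Real.pi_pos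
  have hn : ‖W‖ ^ α = 1 := by rw [← Complex.norm_cpow_real, h, norm_one]
  have hn1 : ‖W‖ = 1 := by
    exact (Real.rpow_left_inj (norm_nonneg W) zero_le_one (by linarith : α ≠ 0)).1
      (by rw [hn, Real.one_rpow])
  have hW0 : W ≠ 0 := by rintro rfl; simp at hn1
  rw [Complex.cpow_def_of_ne_zero hW0] at h
  have hlog : Complex.log W = W.arg * Complex.I := by
    rw [Complex.log, hn1]; simp
  obtain ⟨k, hk⟩ := Complex.exp_eq_one_iff.1 h
  rw [hlog] at hk
  have hk' : W.arg * α = k * (2 * Real.pi) := by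
    have := congrArg Complex.im hk
    simpa using this
  have harg : |W.arg| ≤ Real.pi / 2 := Complex.abs_arg_le_pi_div_two_iff.2 hW
  have hlt : |W.arg * α| < 2 * Real.pi := by
    rw [abs_mul, abs_of_pos (by linarith : (0:ℝ) < α)]
    nlinarith [abs_nonneg W.arg]
  rw [hk', abs_mul, abs_of_pos (by positivity : 0 < 2 * Real.pi)] at hlt
  have hk1 : |(k : ℝ)| < 1 := by
    by_contra hcon
    push Not at hcon
    nlinarith
  have hk0 : k = 0 := by
    have : |k| < 1 := by exact_mod_cast hk1
    simpa using Int.abs_lt_one_iff.1 this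
  rw [hk0] at hk'
  have : W.arg = 0 := by
    have h3 : W.arg * α = 0 := by simpa using hk'
    rcases mul_eq_zero.1 h3 with h4 | h4
    · exact h4
    · linarith
  rw [← Complex.exp_log hW0, hlog, this]; simp

theorem norm_sub_div_add_le (W : ℂ) (hW : 0 ≤ W.re) : ‖(W - 1) / (W + 1)‖ ≤ 1 := by
  rw [norm_div]
  refine div_le_one_of_le₀ ?_ (norm_nonneg _)
  rw [← sq_le_sq₀ (norm_nonneg _) (norm_nonneg _), Complex.sq_norm, Complex.sq_norm,
    Complex.normSq_apply, Complex.normSq_apply]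
  simp
  nlinarith

theorem lens_growth (α : ℝ) (h1 : 1 < α) (h2 : α < 2) (Q : Polynomial ℂ) (d : ℕ)
    (hQ : Q.natDegree ≤ d) (M : ℝ)
    (h : ∀ s : ℝ, 0 ≤ s → ∀ σ : ℝ, (σ = 1 ∨ σ = -1) →
      ‖Q.eval ((1 + s * Complex.exp (σ * (Real.pi - Real.pi * α / 2 : ℝ) * Complex.I))⁻¹)‖ ≤ M)
    (W : ℝ) (hW : 0 < W) (hW1 : W < 1) :
    ‖Q.eval (((1 - W ^ α : ℝ) : ℂ)⁻¹)‖ * ((1 - W) / (1 + W)) ^ d ≤ M := by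
  have hα0 : (α : ℂ) ≠ 0 := by exact_mod_cast (by linarith : α ≠ 0)
  set P : ℂ → ℂ := fun W => W ^ (α : ℂ) with hP
  set g : ℂ → ℂ := dslope P 1 with hg
  set R : ℂ → ℂ := fun v => ∑ k ∈ Finset.range (d + 1), Q.coeff k * v ^ (d - k) with hR
  set F : ℂ → ℂ := fun W => R (1 - P W) * ((-1 / g W) / (W + 1)) ^ d with hFdef
  have hcl : closure {z : ℂ | 0 < z.re} = {z : ℂ | 0 ≤ z.re} := Complex.closure_setOfPred_lt_re 0
  have hopen : IsOpen {z : ℂ | 0 < z.re} := isOpen_lt continuous_const Complex.continuous_re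
  have hmem : {z : ℂ | 0 < z.re} ∈ nhds (1 : ℂ) := hopen.mem_nhds (by simp)
  have hmem' : {z : ℂ | 0 ≤ z.re} ∈ nhds (1 : ℂ) :=
    Filter.mem_of_superset hmem (fun z (hz : 0 < z.re) => le_of_lt hz)
  have hPd : DifferentiableOn ℂ P {z : ℂ | 0 < z.re} := by
    intro z hz
    exact (differentiableAt_id.cpow_const (Or.inl hz)).differentiableWithinAt
  have hPc : ContinuousOn P {z : ℂ | 0 ≤ z.re} := by
    intro z hz
    exact (Complex.continuousAt_cpow_const_of_re_pos (Or.inl hz)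
      (by simp; linarith)).continuousWithinAt
  have hPder : HasDerivAt P α 1 := by
    have := (hasDerivAt_id (1 : ℂ)).cpow_const (c := (α : ℂ)) (Or.inl (by simp))
    simpa using this
  have hgd : DifferentiableOn ℂ g {z : ℂ | 0 < z.re} :=
    (Complex.differentiableOn_dslope hmem).2 hPd
  have hgc : ContinuousOn g {z : ℂ | 0 ≤ z.re} :=
    (continuousOn_dslope hmem').2 ⟨hPc, hPder.differentiableAt⟩
  have hgne1 : ∀ z : ℂ, z ≠ 1 → g z = (P z - 1) / (z - 1) := by
    intro z hz
    rw [hg, dslope_of_ne _ hz, slope_def_field]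
    simp [hP]
  have hg0 : ∀ z : ℂ, 0 ≤ z.re → g z ≠ 0 := by
    intro z hz
    by_cases hz1 : z = 1
    · rw [hz1, hg, dslope_same, hPder.deriv]; exact hα0
    · rw [hgne1 z hz1]
      exact div_ne_zero (sub_ne_zero.2 (cpow_ne_one α h1 h2 z hz hz1)) (sub_ne_zero.2 hz1)
  have hz10 : ∀ z : ℂ, 0 ≤ z.re → z + 1 ≠ 0 := by
    intro z hz h0
    have := congrArg Complex.re h0
    simp at this
    linarith
  have hRd : Differentiable ℂ R := by
    rw [hR]; fun_prop
  have hFd : DiffContOnCl ℂ F {z : ℂ | 0 < z.re} := by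
    constructor
    · have hA : DifferentiableOn ℂ (fun W => R (1 - P W)) {z : ℂ | 0 < z.re} :=
        hRd.comp_differentiableOn (hPd.const_sub 1)
      refine hA.mul (DifferentiableOn.pow (DifferentiableOn.div ?_ (by fun_prop) ?_) d)
      · exact DifferentiableOn.div (by fun_prop) hgd (fun z hz => hg0 z (le_of_lt hz))
      · exact fun z hz => hz10 z (le_of_lt hz)
    · rw [hcl]
      have hA : ContinuousOn (fun W => R (1 - P W)) {z : ℂ | 0 ≤ z.re} :=
        hRd.continuous.comp_continuousOn (continuousOn_const.sub hPc)
      refine hA.mul (ContinuousOn.pow (ContinuousOn.div ?_ (by fun_prop) ?_) d)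
      · exact ContinuousOn.div (by fun_prop) hgc (fun z hz => hg0 z hz)
      · exact fun z hz => hz10 z hz
  have hFeq : ∀ z : ℂ, 0 ≤ z.re → z ≠ 1 →
      F z = Q.eval ((1 - P z)⁻¹) * ((z - 1) / (z + 1)) ^ d := by
    intro z hz hz1
    have hv : 1 - P z ≠ 0 := by
      rw [sub_ne_zero]; exact (cpow_ne_one α h1 h2 z hz hz1).symm
    have hv' : P z - 1 ≠ 0 := by
      rw [sub_ne_zero]; exact (cpow_ne_one α h1 h2 z hz hz1)
    have hRQ : R (1 - P z) = Q.eval ((1 - P z)⁻¹) * (1 - P z) ^ d := by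
      rw [Polynomial.eval_eq_sum_range' (Nat.lt_succ_of_le hQ), Finset.sum_mul, hR]
      refine Finset.sum_congr rfl fun k hk => ?_
      have hk' : k ≤ d := by have := Finset.mem_range.1 hk; omega
      rw [mul_assoc, inv_pow]
      congr 1
      rw [pow_sub₀ _ hv hk', mul_comm]
    rw [hFdef]
    simp only
    rw [hRQ, mul_assoc, ← mul_pow, hgne1 z hz1]
    congr 2
    have := hz10 z hz
    have := sub_ne_zero.2 hz1
    field_simp
    ring
  have hFb : ∀ z : ℂ, 0 ≤ z.re → 2 ≤ ‖z‖ →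
      ‖F z‖ ≤ ∑ k ∈ Finset.range (d + 1), ‖Q.coeff k‖ := by
    intro z hz hz2
    have hz1 : z ≠ 1 := by rintro rfl; norm_num at hz2
    rw [hFeq z hz hz1, norm_mul, norm_pow]
    have hPn : 2 ≤ ‖P z‖ := by
      rw [hP]; simp only
      rw [Complex.norm_cpow_real]
      calc (2 : ℝ) ≤ ‖z‖ := hz2
        _ = ‖z‖ ^ (1 : ℝ) := (Real.rpow_one _).symm
        _ ≤ ‖z‖ ^ α := Real.rpow_le_rpow_of_exponent_le (by linarith) h1.le
    have hvn : 1 ≤ ‖1 - P z‖ := by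
      have := norm_sub_norm_le (P z) 1
      rw [norm_sub_rev] at this
      simp at this
      linarith
    have hinv : ‖(1 - P z)⁻¹‖ ≤ 1 := by
      rw [norm_inv]; exact inv_le_one_of_one_le₀ hvn
    have hq := poly_cont_bound Q d hQ _ 1 le_rfl hinv
    simp only [one_pow, mul_one] at hq
    refine le_trans (mul_le_of_le_one_right (norm_nonneg _) ?_) hq
    exact pow_le_one₀ (norm_nonneg _) (norm_sub_div_add_le z hz)
  have key : ‖F W‖ ≤ M := by
    refine PhragmenLindelof.right_half_plane_of_bounded_on_real hFd ⟨1, by norm_num, 0, ?_⟩ ?_ ?_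
      (by simpa using hW.le)
    · refine Asymptotics.IsBigO.of_bound (∑ k ∈ Finset.range (d + 1), ‖Q.coeff k‖) ?_
      refine Filter.eventually_inf_principal.2 ?_
      have : ∀ᶠ z : ℂ in Bornology.cobounded ℂ, 2 ≤ ‖z‖ :=
        tendsto_norm_cobounded_atTop.eventually (Filter.eventually_ge_atTop 2)
      filter_upwards [this] with w hw2 hw
      simpa using hFb w (le_of_lt hw) hw2
    · refine ⟨∑ k ∈ Finset.range (d + 1), ‖Q.coeff k‖, ?_⟩
      rw [Filter.eventually_map]
      filter_upwards [Filter.eventually_ge_atTop 2] with x hx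
      refine hFb x (by simp; linarith) ?_
      rw [Complex.norm_real, Real.norm_eq_abs]
      exact hx.trans (le_abs_self x)
    · intro x
      obtain ⟨σ, hσ, y, hy, rfl⟩ : ∃ σ : ℝ, (σ = 1 ∨ σ = -1) ∧ ∃ y : ℝ, 0 ≤ y ∧ x = σ * y := by
        rcases le_total 0 x with hx | hx
        · exact ⟨1, Or.inl rfl, x, hx, by ring⟩
        · exact ⟨-1, Or.inr rfl, -x, by linarith, by ring⟩
      have hre : (((σ * y : ℝ) : ℂ) * Complex.I).re = 0 := by simp
      have hne : ((σ * y : ℝ) : ℂ) * Complex.I ≠ 1 := by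
        intro h0
        rw [h0] at hre
        simp at hre
      rw [hFeq _ hre.ge hne, norm_mul, norm_pow]
      refine le_trans (mul_le_of_le_one_right (norm_nonneg _)
        (pow_le_one₀ (norm_nonneg _) (norm_sub_div_add_le _ hre.ge))) ?_
      have hσ' : -σ = 1 ∨ -σ = -1 := by
        rcases hσ with rfl | rfl <;> simp
      have hfin := h (y ^ α) (Real.rpow_nonneg hy _) (-σ) hσ'
      have hexp : Complex.exp ((-σ : ℝ) * (Real.pi - Real.pi * α / 2 : ℝ) * Complex.I)
          = - Complex.exp (σ * (Real.pi * α / 2 : ℝ) * Complex.I) := by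
        have : ((-σ : ℝ) * (Real.pi - Real.pi * α / 2 : ℝ) * Complex.I : ℂ)
          = σ * (Real.pi * α / 2 : ℝ) * Complex.I + (-σ) * (Real.pi * Complex.I) := by
          push_cast; ring
        rw [this, Complex.exp_add]
        have h3 : Complex.exp (-σ * (Real.pi * Complex.I)) = -1 := by
          rcases hσ with rfl | rfl
          · simp [Complex.exp_neg]
          · simp
        rw [h3]; ring
      rw [hexp] at hfin
      rw [hP]; simp only
      rw [cpow_real_im_axis α (by linarith) y hy σ hσ]
      rw [mul_neg, ← sub_eq_add_neg] at hfin
      exact hfin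
  have hWne : (W : ℂ) ≠ 1 := by exact_mod_cast hW1.ne
  rw [hFeq W (by simpa using hW.le) hWne, norm_mul, norm_pow] at key
  have e1 : P W = ((W ^ α : ℝ) : ℂ) := by
    rw [hP]; simp only; rw [Complex.ofReal_cpow hW.le]
  have e2 : ‖((W : ℂ) - 1) / (W + 1)‖ = (1 - W) / (1 + W) := by
    have : ((W : ℂ) - 1) / (W + 1) = (((W - 1) / (W + 1) : ℝ) : ℂ) := by push_cast; rfl
    rw [this, Complex.norm_real, Real.norm_eq_abs, abs_div, abs_of_neg (by linarith),
      abs_of_pos (by linarith)]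
    ring
  rw [e1, e2] at key
  push_cast
  push_cast at key
  exact key

/-- The duality map `z ↦ |z|^{p-2} z`. -/
def dual (p : ℝ) (z : ℂ) : ℂ := ((‖z‖ ^ (p - 2) : ℝ) : ℂ) * z

theorem sinh_type (p : ℝ) (hp1 : 1 < p) (hp2 : p < 2) (r : ℝ) (hr : 1 ≤ r) :
    p * (r - r ^ (p - 1)) ≤ (2 - p) * (r ^ p - 1) := by
  set F : ℝ → ℝ := fun r => (2 - p) * (r ^ p - 1) - p * (r - r ^ (p - 1)) with hF
  have hd : ∀ x : ℝ, 0 < x → HasDerivAt F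
      ((2 - p) * (p * x ^ (p - 1)) - p * (1 - (p - 1) * x ^ (p - 1 - 1))) x := by
    intro x hx
    have h1 := Real.hasDerivAt_rpow_const (x := x) (p := p) (Or.inl hx.ne')
    have h2 := Real.hasDerivAt_rpow_const (x := x) (p := p - 1) (Or.inl hx.ne')
    exact ((h1.sub_const 1).const_mul (2 - p)).sub (((hasDerivAt_id x).sub h2).const_mul p)
  have hmono : MonotoneOn F (Set.Ici 1) := by
    refine monotoneOn_of_deriv_nonneg (convex_Ici 1) ?_ ?_ ?_
    · intro x hx
      exact (hd x (lt_of_lt_of_le one_pos hx)).continuousAt.continuousWithinAt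
    · intro x hx
      rw [interior_Ici] at hx
      exact (hd x (one_pos.trans hx)).differentiableAt.differentiableWithinAt
    · intro x hx
      rw [interior_Ici] at hx
      have hx0 : (0 : ℝ) < x := one_pos.trans hx
      rw [(hd x hx0).deriv]
      have hamgm := Real.geom_mean_le_arith_mean2_weighted (w₁ := 2 - p) (w₂ := p - 1)
        (p₁ := x ^ (p - 1)) (p₂ := x ^ (p - 1 - 1)) (by linarith) (by linarith)
        (by positivity) (by positivity) (by ring)
      rw [← Real.rpow_mul hx0.le, ← Real.rpow_mul hx0.le, ← Real.rpow_add hx0] at hamgm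
      have : (p - 1) * (2 - p) + (p - 1 - 1) * (p - 1) = 0 := by ring
      rw [this, Real.rpow_zero] at hamgm
      nlinarith
  have := hmono (Set.mem_Ici.2 le_rfl) (Set.mem_Ici.2 hr) hr
  simp [hF] at this
  linarith

theorem AB_ineq (p : ℝ) (hp1 : 1 < p) (hp2 : p < 2) (A B : ℝ) (hA : 0 ≤ A) (hB : 0 ≤ B) :
    p ^ 2 * (A * B ^ (p - 1) - A ^ (p - 1) * B) ^ 2 ≤ (2 - p) ^ 2 * (A ^ p - B ^ p) ^ 2 := by
  wlog hAB : B ≤ A generalizing A B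
  · have := this B A hB hA (by linarith)
    nlinarith
  rcases hB.eq_or_lt with rfl | hB
  · rw [Real.zero_rpow (by linarith : p - 1 ≠ 0)]
    simp
    positivity
  have hA : 0 < A := hB.trans_le hAB
  have h := sinh_type p hp1 hp2 (A / B) ((one_le_div hB).2 hAB)
  have e1 : A * B ^ (p - 1) - A ^ (p - 1) * B = B ^ p * (A / B - (A / B) ^ (p - 1)) := by
    rw [Real.div_rpow hA.le hB.le, Real.rpow_sub hB, Real.rpow_one]
    field_simp
  have e2 : A ^ p - B ^ p = B ^ p * ((A / B) ^ p - 1) := by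
    rw [Real.div_rpow hA.le hB.le]
    field_simp
  have h0 : 0 ≤ A / B - (A / B) ^ (p - 1) := by
    have h1 : (A / B) ^ (p - 1) ≤ (A / B) ^ (1 : ℝ) :=
      Real.rpow_le_rpow_of_exponent_le ((one_le_div hB).2 hAB) (by linarith)
    rw [Real.rpow_one] at h1
    linarith
  rw [e1, e2]
  have h3 : (p * (A / B - (A / B) ^ (p - 1))) ^ 2 ≤ ((2 - p) * ((A / B) ^ p - 1)) ^ 2 :=
    pow_le_pow_left₀ (by positivity) h 2
  have h4 : 0 ≤ (B ^ p) ^ 2 := by positivity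
  nlinarith [mul_le_mul_of_nonneg_left h3 h4]

/-- Sectoriality of the duality map. -/
theorem sector_ineq (p : ℝ) (hp1 : 1 < p) (hp2 : p < 2) (c s : ℝ) (hc : c = (2 - p) / p)
    (hcs : c ^ 2 + s ^ 2 = 1) (a b : ℂ) :
    0 ≤ (((c : ℂ) + s * Complex.I) * ((a - b) * starRingEnd ℂ (dual p a - dual p b))).re := by
  set A := ‖a‖ with hA
  set B := ‖b‖ with hB
  have hA0 : 0 ≤ A := norm_nonneg _
  have hB0 : 0 ≤ B := norm_nonneg _
  have hc0 : 0 < c := by rw [hc]; apply div_pos <;> linarith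
  set u := A ^ (p - 2) with hu
  set v := B ^ (p - 2) with hv
  have hu0 : 0 ≤ u := Real.rpow_nonneg hA0 _
  have hv0 : 0 ≤ v := Real.rpow_nonneg hB0 _
  -- expressions for the powers
  have pw : ∀ X : ℝ, 0 ≤ X → X ^ (p - 1) = X ^ (p - 2) * X ∧ X ^ p = X ^ (p - 2) * X ^ 2 := by
    intro X hX
    rcases hX.eq_or_lt with rfl | hX
    · simp [Real.zero_rpow (by linarith : p - 1 ≠ 0), Real.zero_rpow (by linarith : p ≠ 0)]
    · constructor
      · rw [← Real.rpow_add_one hX.ne']; congr 1; ring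
      · rw [← Real.rpow_add_natCast hX.ne']; congr 1; push_cast; ring
  have hAB := AB_ineq p hp1 hp2 A B hA0 hB0
  rw [(pw A hA0).1, (pw A hA0).2, (pw B hB0).1, (pw B hB0).2, ← hu, ← hv] at hAB
  have hA2 : a.re ^ 2 + a.im ^ 2 = A ^ 2 := by
    rw [hA, Complex.sq_norm, Complex.normSq_apply]; ring
  have hB2 : b.re ^ 2 + b.im ^ 2 = B ^ 2 := by
    rw [hB, Complex.sq_norm, Complex.normSq_apply]; ring
  set C := a.re * b.re + a.im * b.im with hC
  set S := a.im * b.re - a.re * b.im with hS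
  have hCS : C ^ 2 + S ^ 2 = A ^ 2 * B ^ 2 := by
    rw [← hA2, ← hB2, hC, hS]; ring
  have hre : (((c : ℂ) + s * Complex.I) * ((a - b) * starRingEnd ℂ (dual p a - dual p b))).re
      = c * (u * A ^ 2 + v * B ^ 2) - (c * (u + v) * C - s * (v - u) * S) := by
    simp only [dual, ← hA, ← hB, ← hu, ← hv]
    simp [← hA2, ← hB2, hC, hS]
    ring
  rw [hre]
  have hcp : c * p = 2 - p := by rw [hc]; field_simp
  have hAB' : (A * B * (v - u)) ^ 2 ≤ c ^ 2 * (u * A ^ 2 - v * B ^ 2) ^ 2 := by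
    have hp0 : 0 < p ^ 2 := by positivity
    have : p ^ 2 * (A * B * (v - u)) ^ 2 ≤ p ^ 2 * (c ^ 2 * (u * A ^ 2 - v * B ^ 2) ^ 2) := by
      calc _ = p ^ 2 * (A * (v * B) - u * A * B) ^ 2 := by ring
        _ ≤ _ := hAB
        _ = _ := by rw [← hcp]; ring
    exact le_of_mul_le_mul_left this hp0
  have hsq : (c * (u + v) * C - s * (v - u) * S) ^ 2 ≤ (c * (u * A ^ 2 + v * B ^ 2)) ^ 2 := by
    have h1 : (c * (u + v) * C - s * (v - u) * S) ^ 2 ≤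
        ((c * (u + v)) ^ 2 + (s * (v - u)) ^ 2) * (C ^ 2 + S ^ 2) := by
      nlinarith [sq_nonneg (c * (u + v) * S + s * (v - u) * C)]
    rw [hCS] at h1
    have hs2 : s ^ 2 = 1 - c ^ 2 := by linarith
    have h2 : ((c * (u + v)) ^ 2 + (s * (v - u)) ^ 2) * (A ^ 2 * B ^ 2)
        = 4 * c ^ 2 * u * v * A ^ 2 * B ^ 2 + (A * B * (v - u)) ^ 2 := by
      rw [mul_pow s, hs2]; ring
    rw [h2] at h1
    calc _ ≤ _ := h1
      _ ≤ 4 * c ^ 2 * u * v * A ^ 2 * B ^ 2 + c ^ 2 * (u * A ^ 2 - v * B ^ 2) ^ 2 := by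
        gcongr
      _ = _ := by ring
  have := abs_le_of_sq_le_sq hsq (by positivity)
  linarith [(abs_le.1 this).2]

/-- Flip the `i`-th coordinate. -/
def flp {n : ℕ} (i : Fin n) (ε : Fin n → Bool) : Fin n → Bool := Function.update ε i (!(ε i))

theorem flp_flp {n : ℕ} (i : Fin n) : Function.Involutive (flp (n := n) i) := by
  intro ε
  simp [flp]

theorem sum_flp {n : ℕ} {Y : Type*} [AddCommMonoid Y] (i : Fin n) (h : (Fin n → Bool) → Y) :
    ∑ ε, h (flp i ε) = ∑ ε, h ε :=
  Equiv.sum_comp (Function.Involutive.toPerm _ (flp_flp i)) h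

theorem sgn_not (b : Bool) : sgn (!b) = - sgn b := by
  cases b <;> simp [sgn]

theorem walsh_flp {n : ℕ} (A : Finset (Fin n)) (i : Fin n) (ε : Fin n → Bool) :
    walsh A (flp i ε) = if i ∈ A then - walsh A ε else walsh A ε := by
  unfold walsh
  split_ifs with h
  · rw [← Finset.mul_prod_erase A _ h, ← Finset.mul_prod_erase A (fun i => sgn (ε i)) h]
    rw [← neg_mul]
    congr 1
    · simp [flp, sgn_not]
    · refine Finset.prod_congr rfl fun j hj => ?_
      simp [flp, Function.update_of_ne (Finset.ne_of_mem_erase hj)]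
  · refine Finset.prod_congr rfl fun j hj => ?_
    have : j ≠ i := by rintro rfl; exact h hj
    simp [flp, Function.update_of_ne this]

theorem pderiv_apply {n : ℕ} (i : Fin n) (f : (Fin n → Bool) → ℂ) (ε : Fin n → Bool) :
    pderiv i f ε = (f ε - f (flp i ε)) / 2 := by
  simp [pderiv, flp]
  ring

theorem coeff_apply {n : ℕ} (f : (Fin n → Bool) → ℂ) (A : Finset (Fin n)) :
    coeff f A = (2 ^ n : ℂ)⁻¹ * ∑ δ, (walsh A δ : ℂ) * f δ := by
  simp [coeff]

theorem coeff_pderiv {n : ℕ} (i : Fin n) (f : (Fin n → Bool) → ℂ) (A : Finset (Fin n)) :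
    coeff (pderiv i f) A = if i ∈ A then coeff f A else 0 := by
  rw [coeff_apply, coeff_apply]
  have h1 : ∑ δ, (walsh A δ : ℂ) * pderiv i f δ
      = (∑ δ, (walsh A δ : ℂ) * f δ - ∑ δ, (walsh A (flp i δ) : ℂ) * f δ) / 2 := by
    rw [← sum_flp i (fun δ => (walsh A (flp i δ) : ℂ) * f δ), ← Finset.sum_sub_distrib,
      Finset.sum_div]
    refine Finset.sum_congr rfl fun δ _ => ?_
    rw [pderiv_apply, flp_flp i δ]
    ring
  rw [h1]
  split_ifs with h
  · simp only [walsh_flp, if_pos h]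
    push_cast
    simp only [neg_mul, Finset.sum_neg_distrib]
    ring
  · simp only [walsh_flp, if_neg h]
    simp

/-- The complex noise operator. -/
def T {n : ℕ} (w : ℂ) (f : (Fin n → Bool) → ℂ) (ε : Fin n → Bool) : ℂ :=
  ∑ A : Finset (Fin n), w ^ A.card * (walsh A ε * coeff f A)

theorem pderiv_T {n : ℕ} (i : Fin n) (w : ℂ) (f : (Fin n → Bool) → ℂ) (ε : Fin n → Bool) :
    pderiv i (T w f) ε
      = ∑ A : Finset (Fin n), if i ∈ A then w ^ A.card * (walsh A ε * coeff f A) else 0 := by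
  rw [pderiv_apply, T, T, ← Finset.sum_sub_distrib, Finset.sum_div]
  refine Finset.sum_congr rfl fun A _ => ?_
  rw [walsh_flp]
  split_ifs
  · push_cast; ring
  · ring

theorem T_pderiv {n : ℕ} (i : Fin n) (w : ℂ) (f : (Fin n → Bool) → ℂ) :
    T w (pderiv i f) = pderiv i (T w f) := by
  ext ε
  rw [pderiv_T, T]
  refine Finset.sum_congr rfl fun A _ => ?_
  rw [coeff_pderiv]
  split_ifs <;> simp

theorem degLE_pderiv {n d : ℕ} (i : Fin n) (f : (Fin n → Bool) → ℂ) (hf : degLE f d) :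
    degLE (pderiv i f) d := by
  intro A hA
  rw [coeff_pderiv, hf A hA]
  simp

theorem sum_pderiv_T {n : ℕ} (S : Finset (Fin n)) (w : ℂ) (f : (Fin n → Bool) → ℂ)
    (ε : Fin n → Bool) :
    ∑ i ∈ S, pderiv i (T w f) ε
      = ∑ A : Finset (Fin n), ((A ∩ S).card : ℂ) * (w ^ A.card * (walsh A ε * coeff f A)) := by
  simp only [pderiv_T]
  rw [Finset.sum_comm]
  refine Finset.sum_congr rfl fun A _ => ?_
  rw [← Finset.sum_filter, Finset.sum_const, nsmul_eq_mul, Finset.filter_mem_eq_inter,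
    Finset.inter_comm]

/-- The multilinear extension. -/
def mlext {n : ℕ} (f : (Fin n → Bool) → ℂ) (y : Fin n → ℝ) : ℂ :=
  ∑ B : Finset (Fin n), ((∏ i ∈ B, y i : ℝ) : ℂ) * coeff f B

theorem mlext_eq {n : ℕ} (f : (Fin n → Bool) → ℂ) (y : Fin n → ℝ) :
    mlext f y = (2 ^ n : ℂ)⁻¹ * ∑ δ : Fin n → Bool, ((∏ i, (1 + y i * sgn (δ i)) : ℝ) : ℂ) * f δ := by
  unfold mlext
  simp only [coeff_apply, Finset.mul_sum]
  rw [Finset.sum_comm]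
  refine Finset.sum_congr rfl fun δ _ => ?_
  rw [Finset.prod_one_add]
  push_cast
  rw [Finset.sum_mul, Finset.mul_sum, Finset.powerset_univ]
  refine Finset.sum_congr rfl fun B _ => ?_
  rw [Finset.prod_mul_distrib, walsh]
  push_cast
  ring

theorem sum_prod_sgn {n : ℕ} (y : Fin n → ℝ) :
    ∑ δ : Fin n → Bool, ∏ i, (1 + y i * sgn (δ i)) = 2 ^ n := by
  have := Finset.prod_univ_sum (fun _ : Fin n => (Finset.univ : Finset Bool))
    (fun i b => 1 + y i * sgn b)
  rw [Fintype.piFinset_univ] at this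
  rw [← this]
  have h : ∀ i, ∑ b : Bool, (1 + y i * sgn b) = 2 := by
    intro i
    simp [sgn]
    ring
  rw [Finset.prod_congr rfl (fun i _ => h i)]
  simp

theorem norm_le_linf {n : ℕ} (f : (Fin n → Bool) → ℂ) (ε : Fin n → Bool) : ‖f ε‖ ≤ linfNorm f :=
  le_ciSup (f := fun ε => ‖f ε‖) (Set.finite_range _).bddAbove ε

theorem abs_sgn (b : Bool) : |sgn b| = 1 := by cases b <;> simp [sgn]

theorem norm_mlext_le {n : ℕ} (f : (Fin n → Bool) → ℂ) (y : Fin n → ℝ) (hy : ∀ i, |y i| ≤ 1) :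
    ‖mlext f y‖ ≤ linfNorm f := by
  rw [mlext_eq, norm_mul]
  have h2 : ‖((2 : ℂ) ^ n)⁻¹‖ = (2 ^ n : ℝ)⁻¹ := by simp
  rw [h2, inv_mul_le_iff₀ (by positivity), ← sum_prod_sgn y, Finset.sum_mul]
  refine (norm_sum_le _ _).trans (Finset.sum_le_sum fun δ _ => ?_)
  have h0 : 0 ≤ ∏ i, (1 + y i * sgn (δ i)) := by
    refine Finset.prod_nonneg fun i _ => ?_
    have : |y i * sgn (δ i)| ≤ 1 := by rw [abs_mul, abs_sgn, mul_one]; exact hy i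
    linarith [(abs_le.1 this).1]
  rw [norm_mul, Complex.norm_real, Real.norm_eq_abs, abs_of_nonneg h0]
  exact mul_le_mul_of_nonneg_left (norm_le_linf f δ) h0

theorem T_ofReal {n : ℕ} (ρ : ℝ) (f : (Fin n → Bool) → ℂ) (ε : Fin n → Bool) :
    T (ρ : ℂ) f ε = mlext f (fun i => ρ * sgn (ε i)) := by
  unfold T mlext
  refine Finset.sum_congr rfl fun A _ => ?_
  rw [Finset.prod_mul_distrib, Finset.prod_const, walsh]
  push_cast
  ring

theorem T_one {n : ℕ} (f : (Fin n → Bool) → ℂ) (ε : Fin n → Bool) : T 1 f ε = f ε := by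
  have h := T_ofReal 1 f ε
  rw [Complex.ofReal_one] at h
  rw [h, mlext_eq]
  rw [Finset.sum_eq_single ε]
  · have h1 : ∏ i, (1 + 1 * sgn (ε i) * sgn (ε i)) = (2 : ℝ) ^ n := by
      have : ∀ i, (1 + 1 * sgn (ε i) * sgn (ε i)) = 2 := by
        intro i; cases ε i <;> simp [sgn] <;> norm_num
      rw [Finset.prod_congr rfl (fun i _ => this i)]
      simp
    rw [h1]
    push_cast
    field_simp
  · intro δ _ hδ
    obtain ⟨i, hi⟩ := Function.ne_iff.1 hδ
    rw [Finset.prod_eq_zero (Finset.mem_univ i)]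
    · simp
    · cases h1 : δ i <;> cases h2 : ε i <;> simp_all [sgn]
  · simp

theorem dirichlet_form {n : ℕ} (p : ℝ) (i : Fin n) (u : (Fin n → Bool) → ℂ) :
    ∑ ε, pderiv i u ε * starRingEnd ℂ (dual p (u ε))
      = (1 / 4 : ℂ) * ∑ ε, (u ε - u (flp i ε)) *
        starRingEnd ℂ (dual p (u ε) - dual p (u (flp i ε))) := by
  have h1 : ∑ ε, (u ε - u (flp i ε)) * starRingEnd ℂ (dual p (u (flp i ε)))
      = - ∑ ε, (u ε - u (flp i ε)) * starRingEnd ℂ (dual p (u ε)) := by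
    rw [← sum_flp i, ← Finset.sum_neg_distrib]
    refine Finset.sum_congr rfl fun ε _ => ?_
    rw [flp_flp i ε]
    ring
  have h2 : ∑ ε, (u ε - u (flp i ε)) * starRingEnd ℂ (dual p (u ε) - dual p (u (flp i ε)))
      = 2 * ∑ ε, (u ε - u (flp i ε)) * starRingEnd ℂ (dual p (u ε)) := by
    have h3 : ∑ ε, (u ε - u (flp i ε)) * starRingEnd ℂ (dual p (u ε) - dual p (u (flp i ε)))
        = ∑ ε, (u ε - u (flp i ε)) * starRingEnd ℂ (dual p (u ε))
          - ∑ ε, (u ε - u (flp i ε)) * starRingEnd ℂ (dual p (u (flp i ε))) := by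
      rw [← Finset.sum_sub_distrib]
      refine Finset.sum_congr rfl fun ε _ => ?_
      rw [map_sub, mul_sub]
    rw [h3, h1]; ring
  rw [h2, ← mul_assoc, Finset.mul_sum]
  refine Finset.sum_congr rfl fun ε _ => ?_
  rw [pderiv_apply]
  ring

theorem kappa_pos (p : ℝ) (hp1 : 1 < p) (hp2 : p < 2) (c s : ℝ) (hc : c = (2 - p) / p)
    (hcs : c ^ 2 + s ^ 2 = 1) (t : ℝ) (ht : 0 ≤ t) (a b : ℂ) :
    0 ≤ ((((c : ℂ) + s * Complex.I) * (1 + t * ((c : ℂ) + s * Complex.I))⁻¹) *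
      ((a - b) * starRingEnd ℂ (dual p a - dual p b))).re := by
  set X := (a - b) * starRingEnd ℂ (dual p a - dual p b) with hX
  have h1 := sector_ineq p hp1 hp2 c s hc hcs a b
  have h2 := sector_ineq p hp1 hp2 c (-s) hc (by simpa using hcs) a b
  rw [← hX] at h1 h2
  have hc0 : 0 < c := by rw [hc]; apply div_pos <;> linarith
  have h3 : 0 ≤ X.re := by
    simp at h1 h2
    nlinarith
  have hinv : (1 + t * ((c : ℂ) + s * Complex.I))⁻¹
      = (1 + t * ((c : ℂ) - s * Complex.I)) *
        (((Complex.normSq (1 + t * ((c : ℂ) + s * Complex.I)))⁻¹ : ℝ) : ℂ) := by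
    rw [Complex.inv_def]
    congr 1
    simp only [map_add, map_mul, map_one, Complex.conj_ofReal, Complex.conj_I]
    ring
  have hcs' : (c : ℂ) ^ 2 + (s : ℂ) ^ 2 = 1 := by exact_mod_cast hcs
  have e : (((c : ℂ) + s * Complex.I) * (1 + t * ((c : ℂ) + s * Complex.I))⁻¹) * X
      = (((Complex.normSq (1 + t * ((c : ℂ) + s * Complex.I)))⁻¹ : ℝ) : ℂ) *
        (((c : ℂ) + s * Complex.I) * X + t * X) := by
    rw [hinv]
    have : ((c : ℂ) + s * Complex.I) * (1 + t * ((c : ℂ) - s * Complex.I))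
        = ((c : ℂ) + s * Complex.I) + t := by
      linear_combination (t : ℂ) * hcs' - (t : ℂ) * s ^ 2 * Complex.I_sq
    linear_combination ((((Complex.normSq (1 + t * ((c : ℂ) + s * Complex.I)))⁻¹ : ℝ) : ℂ) * X) * this
  rw [e, Complex.re_ofReal_mul]
  refine mul_nonneg (inv_nonneg.2 (Complex.normSq_nonneg _)) ?_
  rw [Complex.add_re, Complex.re_ofReal_mul]
  exact add_nonneg h1 (mul_nonneg ht h3)

theorem T_hasDerivAt {n : ℕ} (f : (Fin n → Bool) → ℂ) (ρ e : ℂ) (t : ℝ)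
    (h0 : 1 + (t : ℂ) * e ≠ 0) (ε : Fin n → Bool) :
    HasDerivAt (fun t : ℝ => T (ρ * (1 + (t : ℂ) * e)⁻¹) f ε)
      (-(e * (1 + (t : ℂ) * e)⁻¹) * ∑ i, pderiv i (T (ρ * (1 + (t : ℂ) * e)⁻¹) f) ε) t := by
  have hw : HasDerivAt (fun t : ℝ => ρ * (1 + (t : ℂ) * e)⁻¹)
      (ρ * (-e / (1 + (t : ℂ) * e) ^ 2)) t := by
    have h1 : HasDerivAt (fun t : ℝ => 1 + (t : ℂ) * e) e t := by
      have := ((Complex.ofRealCLM.hasDerivAt (x := t)).mul_const e).const_add 1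
      simpa using this
    exact (h1.inv h0).const_mul ρ
  have hsum : HasDerivAt (fun t : ℝ => T (ρ * (1 + (t : ℂ) * e)⁻¹) f ε)
      (∑ A : Finset (Fin n), ((A.card : ℂ) * (ρ * (1 + (t : ℂ) * e)⁻¹) ^ (A.card - 1) *
        (ρ * (-e / (1 + (t : ℂ) * e) ^ 2))) * (walsh A ε * coeff f A)) t := by
    unfold T
    refine HasDerivAt.fun_sum fun A _ => ?_
    exact (hw.pow A.card).mul_const _
  convert! hsum using 1
  rw [sum_pderiv_T, Finset.mul_sum]
  refine Finset.sum_congr rfl fun A _ => ?_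
  rw [Finset.inter_univ]
  rcases Nat.eq_zero_or_pos A.card with hA | hA
  · simp [hA]
  · obtain ⟨k, hk⟩ : ∃ k, A.card = k + 1 := ⟨A.card - 1, by omega⟩
    rw [hk]
    simp only [Nat.add_sub_cancel, pow_succ]
    field_simp

theorem contraction {n : ℕ} (p : ℝ) (hp1 : 1 < p) (hp2 : p < 2) (c s : ℝ) (hc : c = (2 - p) / p)
    (hcs : c ^ 2 + s ^ 2 = 1) (f : (Fin n → Bool) → ℂ) (ρ : ℂ) (t : ℝ) (ht : 0 ≤ t) :
    ∑ ε, ‖T (ρ * (1 + (t : ℂ) * ((c : ℂ) + s * Complex.I))⁻¹) f ε‖ ^ p ≤ ∑ ε, ‖T ρ f ε‖ ^ p := by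
  set e : ℂ := (c : ℂ) + s * Complex.I with he
  have hc0 : 0 < c := by rw [hc]; apply div_pos <;> linarith
  have h0 : ∀ t : ℝ, 0 ≤ t → 1 + (t : ℂ) * e ≠ 0 := by
    intro t ht h
    have := congrArg Complex.re h
    simp [he] at this
    nlinarith
  set Φ : ℝ → ℝ := fun t => ∑ ε, ‖T (ρ * (1 + (t : ℂ) * e)⁻¹) f ε‖ ^ p with hΦ
  have hd : ∀ t : ℝ, 0 ≤ t → ∃ D : ℝ, D ≤ 0 ∧ HasDerivAt Φ D t := by
    intro t ht
    set u : (Fin n → Bool) → ℂ := T (ρ * (1 + (t : ℂ) * e)⁻¹) f with hu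
    set κ : ℂ := e * (1 + (t : ℂ) * e)⁻¹ with hκ
    have hder : HasDerivAt Φ (∑ ε, (p * ‖u ε‖ ^ (p - 2)) *
        inner ℝ (u ε) (-κ * ∑ i, pderiv i u ε)) t := by
      refine HasDerivAt.fun_sum fun ε _ => ?_
      have h1 := (hasFDerivAt_norm_rpow (u ε) hp1).comp_hasDerivAt t
        (T_hasDerivAt f ρ e t (h0 t ht) ε)
      exact h1
    refine ⟨_, ?_, hder⟩
    have hre : ∑ ε, (p * ‖u ε‖ ^ (p - 2)) * inner ℝ (u ε) (-κ * ∑ i, pderiv i u ε)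
        = - p * (κ * ∑ i, ∑ ε, pderiv i u ε * starRingEnd ℂ (dual p (u ε))).re := by
      rw [Finset.sum_comm, Finset.mul_sum, Complex.re_sum, Finset.mul_sum]
      refine Finset.sum_congr rfl fun ε _ => ?_
      rw [Complex.inner, ← Finset.sum_mul]
      have : κ * ((∑ i, pderiv i u ε) * starRingEnd ℂ (dual p (u ε)))
          = ((‖u ε‖ ^ (p - 2) : ℝ) : ℂ) * -(-κ * (∑ i, pderiv i u ε) * starRingEnd ℂ (u ε)) := by
        simp only [dual, map_mul, Complex.conj_ofReal]
        ring
      rw [this, Complex.re_ofReal_mul, Complex.neg_re]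
      ring
    rw [hre]
    have hnn : 0 ≤ (κ * ∑ i, ∑ ε, pderiv i u ε * starRingEnd ℂ (dual p (u ε))).re := by
      simp only [dirichlet_form]
      rw [Finset.mul_sum, Complex.re_sum]
      refine Finset.sum_nonneg fun i _ => ?_
      have : κ * ((1 / 4 : ℂ) * ∑ ε, (u ε - u (flp i ε)) *
          starRingEnd ℂ (dual p (u ε) - dual p (u (flp i ε))))
          = ((1 / 4 : ℝ) : ℂ) * ∑ ε, κ * ((u ε - u (flp i ε)) *
          starRingEnd ℂ (dual p (u ε) - dual p (u (flp i ε)))) := by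
        rw [← Finset.mul_sum]; push_cast; ring
      rw [this, Complex.re_ofReal_mul, Complex.re_sum]
      refine mul_nonneg (by norm_num) (Finset.sum_nonneg fun ε _ => ?_)
      exact kappa_pos p hp1 hp2 c s hc hcs t ht _ _
    nlinarith
  have hanti : AntitoneOn Φ (Set.Ici 0) := by
    refine antitoneOn_of_deriv_nonpos (convex_Ici 0) ?_ ?_ ?_
    · intro x hx
      obtain ⟨D, _, h⟩ := hd x hx
      exact h.continuousAt.continuousWithinAt
    · intro x hx
      rw [interior_Ici] at hx
      obtain ⟨D, _, h⟩ := hd x (le_of_lt hx)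
      exact h.differentiableAt.differentiableWithinAt
    · intro x hx
      rw [interior_Ici] at hx
      obtain ⟨D, hD, h⟩ := hd x (le_of_lt hx)
      rw [h.deriv]; exact hD
  have := hanti (Set.mem_Ici.2 le_rfl) (Set.mem_Ici.2 ht) ht
  simpa [hΦ] using this


theorem norm_dual (p : ℝ) (hp1 : 1 < p) (z : ℂ) : ‖dual p z‖ = ‖z‖ ^ (p - 1) := by
  rcases eq_or_ne z 0 with rfl | hz
  · simp [dual, Real.zero_rpow (by linarith : p - 1 ≠ 0)]
  · have hz0 : 0 < ‖z‖ := norm_pos_iff.2 hz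
    rw [dual, norm_mul, Complex.norm_real, Real.norm_eq_abs, abs_of_nonneg (by positivity),
      ← Real.rpow_add_one hz0.ne']
    congr 1
    ring

theorem mul_conj_dual (p : ℝ) (hp1 : 1 < p) (z : ℂ) :
    z * starRingEnd ℂ (dual p z) = ((‖z‖ ^ p : ℝ) : ℂ) := by
  rcases eq_or_ne z 0 with rfl | hz
  · simp [dual, Real.zero_rpow (by linarith : p ≠ 0)]
  · have hz0 : 0 < ‖z‖ := norm_pos_iff.2 hz
    have h1 : ‖z‖ ^ p = ‖z‖ ^ (p - 2) * ‖z‖ ^ 2 := by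
      rw [← Real.rpow_natCast, ← Real.rpow_add hz0]
      congr 1
      push_cast
      ring
    have h2 := Complex.mul_conj' z
    rw [h1, dual, map_mul, Complex.conj_ofReal]
    push_cast
    rw [← h2]
    ring

theorem holder_dual {n : ℕ} (p : ℝ) (hp1 : 1 < p) (u g : (Fin n → Bool) → ℂ) :
    ‖∑ ε, u ε * starRingEnd ℂ (dual p (g ε))‖
      ≤ (∑ ε, ‖u ε‖ ^ p) ^ (1 / p) * (∑ ε, ‖g ε‖ ^ p) ^ (1 - 1 / p) := by
  have hq := Real.HolderConjugate.conjExponent hp1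
  have h := Real.inner_le_Lp_mul_Lq Finset.univ (fun ε => ‖u ε‖) (fun ε => ‖g ε‖ ^ (p - 1)) hq
  have hq1 : 1 / p.conjExponent = 1 - 1 / p := by
    rw [Real.conjExponent]
    have : p - 1 ≠ 0 := by linarith
    have : p ≠ 0 := by linarith
    field_simp
  rw [hq1] at h
  have e1 : ∀ ε, |‖g ε‖ ^ (p - 1)| ^ p.conjExponent = ‖g ε‖ ^ p := by
    intro ε
    rw [abs_of_nonneg (by positivity), ← Real.rpow_mul (norm_nonneg _)]
    congr 1
    rw [Real.conjExponent]
    have : p - 1 ≠ 0 := by linarith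
    field_simp
  simp only [e1, abs_norm] at h
  refine (norm_sum_le _ _).trans (le_trans (le_of_eq ?_) h)
  refine Finset.sum_congr rfl fun ε _ => ?_
  rw [norm_mul, RCLike.norm_conj, norm_dual p hp1]

theorem ratio_pow_ge (d : ℕ) (hd : 1 ≤ d) :
    Real.exp (-2) ≤ ((1 - 1 / (2 * (d : ℝ))) / (1 + 1 / (2 * (d : ℝ)))) ^ d := by
  have hd' : (1 : ℝ) ≤ d := by exact_mod_cast hd
  set W : ℝ := 1 / (2 * (d : ℝ)) with hW
  have hW0 : 0 < W := by positivity
  have hW1 : W ≤ 1 / 2 := by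
    rw [hW]; apply one_div_le_one_div_of_le <;> linarith
  have hWd : W * d = 1 / 2 := by rw [hW]; field_simp
  have h1 : Real.exp (-(4 * W)) ≤ (1 - W) / (1 + W) := by
    rw [Real.exp_neg, inv_le_comm₀ (Real.exp_pos _) (by apply div_pos <;> linarith), inv_div]
    refine le_trans ?_ (Real.add_one_le_exp (4 * W))
    rw [div_le_iff₀ (by linarith)]
    nlinarith
  calc Real.exp (-2) = Real.exp (-(4 * W)) ^ d := by
        rw [← Real.exp_nat_mul]; congr 1; linear_combination (-4 : ℝ) * hWd.symm
    _ ≤ _ := by gcongr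

theorem reverse {n : ℕ} (p : ℝ) (hp1 : 1 < p) (hp2 : p < 2) (α : ℝ) (hα1 : 1 < α) (hα2 : α < 2)
    (hcos : Real.cos (Real.pi - Real.pi * α / 2) = (2 - p) / p) (d : ℕ) (hd : 1 ≤ d)
    (g : (Fin n → Bool) → ℂ) (hg : degLE g d) :
    ∑ ε, ‖g ε‖ ^ p ≤ Real.exp (2 * p) *
      ∑ ε, ‖T ((1 - (1 / (2 * (d : ℝ))) ^ α : ℝ) : ℂ) g ε‖ ^ p := by
  have hd' : (1 : ℝ) ≤ d := by exact_mod_cast hd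
  set W : ℝ := 1 / (2 * (d : ℝ)) with hW
  have hW0 : 0 < W := by positivity
  have hW1 : W ≤ 1 / 2 := by
    rw [hW]; apply one_div_le_one_div_of_le <;> linarith
  have hWα : W ^ α < 1 := Real.rpow_lt_one hW0.le (by linarith) (by linarith)
  set ρ : ℂ := ((1 - W ^ α : ℝ) : ℂ) with hρ
  have hρ0 : ρ ≠ 0 := by
    rw [hρ, Complex.ofReal_ne_zero]; linarith
  set G := ∑ ε, ‖g ε‖ ^ p with hG
  set N := ∑ ε, ‖T ρ g ε‖ ^ p with hN
  set θ : ℝ := Real.pi - Real.pi * α / 2 with hθ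
  let Q : Polynomial ℂ := ∑ A : Finset (Fin n), Polynomial.C (ρ ^ A.card * coeff g A *
    ∑ ε, (walsh A ε : ℂ) * starRingEnd ℂ (dual p (g ε))) * Polynomial.X ^ A.card
  have hQd : Q.natDegree ≤ d := by
    refine Polynomial.natDegree_sum_le_of_forall_le _ _ fun A _ => ?_
    rcases le_or_gt A.card d with hA | hA
    · exact (Polynomial.natDegree_C_mul_X_pow_le _ _).trans hA
    · rw [hg A hA]; simp
  have hQe : ∀ w : ℂ, Q.eval w = ∑ ε, T (ρ * w) g ε * starRingEnd ℂ (dual p (g ε)) := by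
    intro w
    simp only [Q, Polynomial.eval_finsetSum, Polynomial.eval_mul, Polynomial.eval_C,
      Polynomial.eval_pow, Polynomial.eval_X, T, Finset.sum_mul, Finset.mul_sum]
    rw [Finset.sum_comm]
    refine Finset.sum_congr rfl fun ε _ => Finset.sum_congr rfl fun A _ => ?_
    rw [mul_pow]
    ring
  have hN0 : 0 ≤ N := Finset.sum_nonneg fun ε _ => by positivity
  have hG0 : 0 ≤ G := Finset.sum_nonneg fun ε _ => by positivity
  have key := lens_growth α hα1 hα2 Q d hQd (N ^ (1 / p) * G ^ (1 - 1 / p)) (by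
    intro s hs σ hσ
    have he : Complex.exp (σ * (θ : ℝ) * Complex.I)
        = ((Real.cos θ : ℝ) : ℂ) + ((σ * Real.sin θ : ℝ) : ℂ) * Complex.I := by
      have : (σ * (θ : ℝ) * Complex.I : ℂ) = ((σ * θ : ℝ) : ℂ) * Complex.I := by push_cast; ring
      rw [this, Complex.exp_mul_I, ← Complex.ofReal_cos, ← Complex.ofReal_sin]
      rcases hσ with rfl | rfl <;> simp
    rw [he, hQe]
    refine (holder_dual p hp1 _ _).trans ?_
    refine mul_le_mul_of_nonneg_right ?_ (by positivity)
    refine Real.rpow_le_rpow (Finset.sum_nonneg fun ε _ => by positivity) ?_ (by positivity)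
    refine contraction p hp1 hp2 _ _ hcos ?_ g ρ s hs
    have := Real.sin_sq_add_cos_sq θ
    rcases hσ with rfl | rfl <;> nlinarith) W hW0 (by linarith)
  have hQ1 : Q.eval ρ⁻¹ = ((G : ℝ) : ℂ) := by
    rw [hQe, mul_inv_cancel₀ hρ0, hG, Complex.ofReal_sum]
    refine Finset.sum_congr rfl fun ε _ => ?_
    rw [T_one, mul_conj_dual p hp1]
  rw [hQ1, Complex.norm_real, Real.norm_eq_abs, abs_of_nonneg hG0] at key
  have hr := ratio_pow_ge d hd
  have key2 : G * Real.exp (-2) ≤ N ^ (1 / p) * G ^ (1 - 1 / p) :=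
    (mul_le_mul_of_nonneg_left hr hG0).trans key
  rcases hG0.eq_or_lt with h0 | hGp
  · rw [← h0]; positivity
  have key3 : G ^ (1 / p) ≤ Real.exp 2 * N ^ (1 / p) := by
    have e1 : G = G ^ (1 / p) * G ^ (1 - 1 / p) := by
      rw [← Real.rpow_add hGp]; simp
    have hpos : 0 < G ^ (1 - 1 / p) := Real.rpow_pos_of_pos hGp _
    have e2 : G ^ (1 / p) * Real.exp (-2) ≤ N ^ (1 / p) := by
      refine le_of_mul_le_mul_right ?_ hpos
      calc _ = (G ^ (1 / p) * G ^ (1 - 1 / p)) * Real.exp (-2) := by ring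
        _ ≤ _ := by rw [← e1]; exact key2
    rw [Real.exp_neg, ← div_eq_mul_inv, div_le_iff₀ (Real.exp_pos _)] at e2
    linarith
  have hp0 : p ≠ 0 := by linarith
  calc G = (G ^ (1 / p)) ^ p := by
        rw [← Real.rpow_mul hG0, one_div, inv_mul_cancel₀ hp0, Real.rpow_one]
    _ ≤ (Real.exp 2 * N ^ (1 / p)) ^ p :=
        Real.rpow_le_rpow (by positivity) key3 (by linarith)
    _ = Real.exp (2 * p) * N := by
        rw [Real.mul_rpow (Real.exp_pos _).le (by positivity), ← Real.rpow_mul hN0, one_div,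
          inv_mul_cancel₀ hp0, Real.rpow_one, ← Real.exp_mul]

theorem norm_sum_pderiv_le {n : ℕ} (d : ℕ) (hd : 1 ≤ d) (f : (Fin n → Bool) → ℂ)
    (hf : degLE f d) (ρ : ℝ) (h0 : 0 ≤ ρ) (h1 : ρ < 1) (x : Fin n → Bool) (S : Finset (Fin n)) :
    ‖∑ i ∈ S, pderiv i (T (ρ : ℂ) f) x‖ * √(1 - ρ ^ 2) ≤ Real.exp 1 * d * linfNorm f := by
  let q : Polynomial ℂ := ∑ B : Finset (Fin n),
    Polynomial.C ((ρ : ℂ) ^ (B \ S).card * (walsh B x * coeff f B)) *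
      Polynomial.X ^ (B ∩ S).card
  have hqd : q.natDegree ≤ d := by
    refine Polynomial.natDegree_sum_le_of_forall_le _ _ fun B _ => ?_
    rcases le_or_gt B.card d with hB | hB
    · exact (Polynomial.natDegree_C_mul_X_pow_le _ _).trans
        ((Finset.card_le_card Finset.inter_subset_left).trans hB)
    · rw [hf B hB]; simp
  have hqe : ∀ s : ℝ, q.eval (s : ℂ)
      = mlext f (fun i => (if i ∈ S then s else ρ) * sgn (x i)) := by
    intro s
    simp only [q, Polynomial.eval_finsetSum, Polynomial.eval_mul, Polynomial.eval_C,
      Polynomial.eval_pow, Polynomial.eval_X, mlext]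
    refine Finset.sum_congr rfl fun B _ => ?_
    rw [Finset.prod_mul_distrib, Finset.prod_ite, Finset.prod_const, Finset.prod_const,
      Finset.filter_mem_eq_inter, Finset.filter_notMem_eq_sdiff, walsh]
    push_cast
    ring
  have hb := bernstein_ineq q d hd hqd (linfNorm f) (by
    intro s hs
    rw [hqe]
    refine norm_mlext_le f _ fun i => ?_
    rw [abs_mul, abs_sgn, mul_one]
    split_ifs
    · exact hs
    · rw [abs_of_nonneg h0]; exact h1.le) ρ (by rw [abs_of_nonneg h0]; exact h1.le)
  have hder : (ρ : ℂ) * q.derivative.eval (ρ : ℂ) = ∑ i ∈ S, pderiv i (T (ρ : ℂ) f) x := by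
    rw [sum_pderiv_T]
    simp only [q, Polynomial.derivative_sum, Polynomial.eval_finsetSum,
      Polynomial.derivative_C_mul_X_pow, Polynomial.eval_mul, Polynomial.eval_C,
      Polynomial.eval_pow, Polynomial.eval_X, Finset.mul_sum]
    refine Finset.sum_congr rfl fun B _ => ?_
    have hc : B.card = (B ∩ S).card + (B \ S).card := (Finset.card_inter_add_card_sdiff B S).symm
    rcases Nat.eq_zero_or_pos (B ∩ S).card with h | h
    · simp [h]
    · obtain ⟨k, hk⟩ : ∃ k, (B ∩ S).card = k + 1 := ⟨(B ∩ S).card - 1, by omega⟩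
      rw [hc, hk]
      simp only [Nat.add_sub_cancel, pow_succ, pow_add]
      ring
  rw [← hder, norm_mul, Complex.norm_real, Real.norm_eq_abs, abs_of_nonneg h0]
  refine le_trans ?_ hb
  refine mul_le_mul_of_nonneg_right ?_ (Real.sqrt_nonneg _)
  nlinarith [norm_nonneg (q.derivative.eval (ρ : ℂ))]

theorem sum_abs_le {ι : Type*} [Fintype ι] (a : ι → ℝ) (M : ℝ)
    (h : ∀ S : Finset ι, |∑ i ∈ S, a i| ≤ M) : ∑ i, |a i| ≤ 2 * M := by
  classical
  rw [← Finset.sum_filter_add_sum_filter_not Finset.univ (fun i => 0 ≤ a i)]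
  have e1 : ∑ i with 0 ≤ a i, |a i| = ∑ i with 0 ≤ a i, a i :=
    Finset.sum_congr rfl fun i hi => abs_of_nonneg (Finset.mem_filter.1 hi).2
  have e2 : ∑ i with ¬ 0 ≤ a i, |a i| = - ∑ i with ¬ 0 ≤ a i, a i := by
    rw [← Finset.sum_neg_distrib]
    exact Finset.sum_congr rfl fun i hi => abs_of_neg (not_le.1 (Finset.mem_filter.1 hi).2)
  rw [e1, e2]
  have h1 := (le_abs_self _).trans (h (Finset.univ.filter fun i => 0 ≤ a i))
  have h2 := (neg_le_abs _).trans (h (Finset.univ.filter fun i => ¬ 0 ≤ a i))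
  linarith

theorem sum_norm_le {ι : Type*} [Fintype ι] (a : ι → ℂ) (M : ℝ)
    (h : ∀ S : Finset ι, ‖∑ i ∈ S, a i‖ ≤ M) : ∑ i, ‖a i‖ ≤ 4 * M := by
  have h1 := sum_abs_le (fun i => (a i).re) M fun S => by
    rw [← Complex.re_sum]; exact (Complex.abs_re_le_norm _).trans (h S)
  have h2 := sum_abs_le (fun i => (a i).im) M fun S => by
    rw [← Complex.im_sum]; exact (Complex.abs_im_le_norm _).trans (h S)
  calc ∑ i, ‖a i‖ ≤ ∑ i, (|(a i).re| + |(a i).im|) :=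
        Finset.sum_le_sum fun i _ => Complex.norm_le_abs_re_add_abs_im _
    _ ≤ 4 * M := by rw [Finset.sum_add_distrib]; linarith

theorem sum_norm_pderiv_le {n : ℕ} (d : ℕ) (hd : 1 ≤ d) (f : (Fin n → Bool) → ℂ)
    (hf : degLE f d) (ρ : ℝ) (h0 : 0 ≤ ρ) (h1 : ρ < 1) (x : Fin n → Bool) :
    ∑ i, ‖pderiv i (T (ρ : ℂ) f) x‖ ≤ 4 * (Real.exp 1 * d * linfNorm f / √(1 - ρ ^ 2)) := by
  refine sum_norm_le _ _ fun S => ?_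
  rw [le_div_iff₀ (Real.sqrt_pos.2 (by nlinarith))]
  exact norm_sum_pderiv_le d hd f hf ρ h0 h1 x S

theorem linf_nonneg {n : ℕ} (f : (Fin n → Bool) → ℂ) : 0 ≤ linfNorm f :=
  (norm_nonneg _).trans (norm_le_linf f (fun _ => true))

theorem lpNorm_rpow {n : ℕ} (p : ℝ) (hp : 0 < p) (f : (Fin n → Bool) → ℂ) :
    lpNorm p f ^ p = (2 ^ n : ℝ)⁻¹ * ∑ ε, ‖f ε‖ ^ p := by
  rw [lpNorm, ← Real.rpow_mul, one_div, inv_mul_cancel₀ hp.ne', Real.rpow_one]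
  exact mul_nonneg (by positivity) (Finset.sum_nonneg fun ε _ => by positivity)

theorem norm_pderiv_T_le {n : ℕ} (f : (Fin n → Bool) → ℂ) (ρ : ℝ) (h0 : 0 ≤ ρ) (h1 : ρ ≤ 1)
    (i : Fin n) (x : Fin n → Bool) : ‖pderiv i (T (ρ : ℂ) f) x‖ ≤ linfNorm f := by
  have hT : ∀ y, ‖T (ρ : ℂ) f y‖ ≤ linfNorm f := by
    intro y
    rw [T_ofReal]
    refine norm_mlext_le f _ fun i => ?_
    rw [abs_mul, abs_sgn, mul_one, abs_of_nonneg h0]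
    exact h1
  rw [pderiv_apply, norm_div, Complex.norm_ofNat]
  have := norm_sub_le (T (ρ : ℂ) f x) (T (ρ : ℂ) f (flp i x))
  linarith [hT x, hT (flp i x)]

theorem influence_bound {n : ℕ} (p : ℝ) (hp1 : 1 < p) (hp2 : p < 2) (α : ℝ) (hα1 : 1 < α)
    (hα2 : α < 2) (hcos : Real.cos (Real.pi - Real.pi * α / 2) = (2 - p) / p) (d : ℕ)
    (hd : 1 ≤ d) (f : (Fin n → Bool) → ℂ) (hf : degLE f d) :
    ∑ i : Fin n, (lpNorm p (pderiv i f)) ^ p ≤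
      8 * Real.exp (2 * p + 1) * (d : ℝ) ^ (1 + α / 2) * (linfNorm f) ^ p := by
  have hd' : (1 : ℝ) ≤ d := by exact_mod_cast hd
  have hM := linf_nonneg f
  set M := linfNorm f with hMdef
  set W : ℝ := 1 / (2 * (d : ℝ)) with hW
  have hW0 : 0 < W := by positivity
  have hW1 : W ≤ 1 / 2 := by
    rw [hW]; apply one_div_le_one_div_of_le <;> linarith
  have hWα : W ^ α < 1 := Real.rpow_lt_one hW0.le (by linarith) (by linarith)
  have hWα0 : 0 < W ^ α := Real.rpow_pos_of_pos hW0 _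
  set ρ : ℝ := 1 - W ^ α with hρ
  have hρ0 : 0 ≤ ρ := by linarith
  have hρ1 : ρ < 1 := by linarith
  have hsq : W ^ (α / 2) ≤ √(1 - ρ ^ 2) := by
    apply Real.le_sqrt_of_sq_le
    rw [← Real.rpow_natCast, ← Real.rpow_mul hW0.le]
    have : α / 2 * ((2 : ℕ) : ℝ) = α := by push_cast; ring
    rw [this]
    nlinarith
  have hWh : 0 < W ^ (α / 2) := Real.rpow_pos_of_pos hW0 _
  have hfrac : (d : ℝ) / √(1 - ρ ^ 2) ≤ 2 * (d : ℝ) ^ (1 + α / 2) := by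
    calc (d : ℝ) / √(1 - ρ ^ 2) ≤ d / W ^ (α / 2) := by gcongr
      _ = d * (2 * (d : ℝ)) ^ (α / 2) := by
          rw [hW, one_div, Real.inv_rpow (by positivity), div_inv_eq_mul]
      _ = (2 : ℝ) ^ (α / 2) * (d : ℝ) ^ (1 + α / 2) := by
          rw [Real.mul_rpow (by norm_num) (by positivity), Real.rpow_add (by positivity),
            Real.rpow_one]
          ring
      _ ≤ 2 * (d : ℝ) ^ (1 + α / 2) := by
          refine mul_le_mul_of_nonneg_right ?_ (by positivity)
          calc (2 : ℝ) ^ (α / 2) ≤ (2 : ℝ) ^ (1 : ℝ) :=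
                Real.rpow_le_rpow_of_exponent_le (by norm_num) (by linarith)
            _ = 2 := Real.rpow_one 2
  have hterm : ∀ i x, ‖pderiv i (T (ρ : ℂ) f) x‖ ^ p
      ≤ M ^ (p - 1) * ‖pderiv i (T (ρ : ℂ) f) x‖ := by
    intro i x
    have hb := norm_pderiv_T_le f ρ hρ0 hρ1.le i x
    rcases (norm_nonneg (pderiv i (T (ρ : ℂ) f) x)).eq_or_lt with h | h
    · rw [← h, Real.zero_rpow (by linarith)]; simp
    · calc ‖pderiv i (T (ρ : ℂ) f) x‖ ^ p
          = ‖pderiv i (T (ρ : ℂ) f) x‖ ^ (p - 1) * ‖pderiv i (T (ρ : ℂ) f) x‖ := by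
            rw [← Real.rpow_add_one h.ne']; congr 1; ring
        _ ≤ _ := by
            refine mul_le_mul_of_nonneg_right ?_ h.le
            exact Real.rpow_le_rpow h.le hb (by linarith)
  have hx : ∀ x, ∑ i, ‖pderiv i (T (ρ : ℂ) f) x‖ ^ p
      ≤ 8 * Real.exp 1 * (d : ℝ) ^ (1 + α / 2) * M ^ p := by
    intro x
    have hs := sum_norm_pderiv_le d hd f hf ρ hρ0 hρ1 x
    have hMp : M ^ (p - 1) * M = M ^ p := by
      rcases hM.eq_or_lt with h | h
      · rw [← h, Real.zero_rpow (by linarith), Real.zero_rpow (by linarith)]; simp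
      · rw [← Real.rpow_add_one h.ne']; congr 1; ring
    calc ∑ i, ‖pderiv i (T (ρ : ℂ) f) x‖ ^ p
        ≤ M ^ (p - 1) * ∑ i, ‖pderiv i (T (ρ : ℂ) f) x‖ := by
          rw [Finset.mul_sum]; exact Finset.sum_le_sum fun i _ => hterm i x
      _ ≤ M ^ (p - 1) * (4 * (Real.exp 1 * d * M / √(1 - ρ ^ 2))) :=
          mul_le_mul_of_nonneg_left hs (by positivity)
      _ = 4 * Real.exp 1 * (M ^ (p - 1) * M) * (d / √(1 - ρ ^ 2)) := by ring
      _ ≤ 4 * Real.exp 1 * (M ^ (p - 1) * M) * (2 * (d : ℝ) ^ (1 + α / 2)) :=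
          mul_le_mul_of_nonneg_left hfrac (by positivity)
      _ = _ := by rw [hMp]; ring
  have hi : ∀ i, lpNorm p (pderiv i f) ^ p
      ≤ (2 ^ n : ℝ)⁻¹ * (Real.exp (2 * p) * ∑ ε, ‖pderiv i (T (ρ : ℂ) f) ε‖ ^ p) := by
    intro i
    rw [lpNorm_rpow p (by linarith)]
    refine mul_le_mul_of_nonneg_left ?_ (by positivity)
    have := reverse p hp1 hp2 α hα1 hα2 hcos d hd (pderiv i f) (degLE_pderiv i f hf)
    rw [T_pderiv] at this
    exact this
  calc ∑ i : Fin n, (lpNorm p (pderiv i f)) ^ p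
      ≤ ∑ i : Fin n, (2 ^ n : ℝ)⁻¹ *
          (Real.exp (2 * p) * ∑ ε, ‖pderiv i (T (ρ : ℂ) f) ε‖ ^ p) :=
        Finset.sum_le_sum fun i _ => hi i
    _ = (2 ^ n : ℝ)⁻¹ * (Real.exp (2 * p) *
          ∑ ε, ∑ i : Fin n, ‖pderiv i (T (ρ : ℂ) f) ε‖ ^ p) := by
        rw [Finset.sum_comm, ← Finset.mul_sum, ← Finset.mul_sum]
    _ ≤ (2 ^ n : ℝ)⁻¹ * (Real.exp (2 * p) *
          ∑ ε : Fin n → Bool, 8 * Real.exp 1 * (d : ℝ) ^ (1 + α / 2) * M ^ p) := by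
        gcongr with ε _
        exact hx ε
    _ = _ := by
        rw [Finset.sum_const, Finset.card_univ, Fintype.card_fun, Fintype.card_bool,
          Fintype.card_fin, nsmul_eq_mul, Real.exp_add]
        push_cast
        field_simp

/-- **Improved bound on the `ℓ_p` sum of influences of bounded low-degree functions.** -/
theorem stmt15 (p : ℝ) (hp1 : 1 < p) (hp2 : p < 4 / 3) :
    ∃ K : ℝ, 0 < K ∧
      ∀ n d : ℕ, 1 ≤ d → d ≤ n → ∀ f : (Fin n → Bool) → ℂ, degLE f d →
        ∑ i : Fin n, (lpNorm p (pderiv i f)) ^ p ≤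
          K * (d : ℝ) ^ (2 - (1 / Real.pi) * Real.arcsin (2 * Real.sqrt (p - 1) / p)) *
            (linfNorm f) ^ p := by
  refine ⟨8 * Real.exp (2 * p + 1), by positivity, ?_⟩
  intro n d hd _ f hf
  set x := 2 * Real.sqrt (p - 1) / p with hx
  set θ := Real.arcsin x with hθ
  have hp0 : 0 < p := by linarith
  have hsq : Real.sqrt (p - 1) ^ 2 = p - 1 := Real.sq_sqrt (by linarith)
  have hx0 : 0 < x := by
    have : 0 < Real.sqrt (p - 1) := Real.sqrt_pos.2 (by linarith)
    positivity
  have hxsq : 1 - x ^ 2 = ((2 - p) / p) ^ 2 := by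
    rw [hx, div_pow, div_pow, mul_pow, hsq]
    field_simp
    ring
  have hx1 : x < 1 := by
    have : 0 < (2 - p) / p := div_pos (by linarith) hp0
    nlinarith
  have hθ0 : 0 < θ := Real.arcsin_pos.2 hx0
  have hθ1 : θ < Real.pi / 2 := Real.arcsin_lt_pi_div_two.2 hx1
  have hπ := Real.pi_pos
  have hcosθ : Real.cos θ = (2 - p) / p := by
    rw [hθ, Real.cos_arcsin, hxsq, Real.sqrt_sq]
    exact div_nonneg (by linarith) hp0.le
  have e1 : Real.pi - Real.pi * (2 - 2 * θ / Real.pi) / 2 = θ := by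
    field_simp
    ring
  have h := influence_bound p hp1 (by linarith) (2 - 2 * θ / Real.pi)
    (by
      have : 2 * θ / Real.pi < 1 := by rw [div_lt_one hπ]; linarith
      linarith)
    (by
      have : 0 < 2 * θ / Real.pi := by positivity
      linarith) (by rw [e1]; exact hcosθ) d hd f hf
  have e2 : 1 + (2 - 2 * θ / Real.pi) / 2 = 2 - 1 / Real.pi * θ := by ring
  rw [e2] at h
  exact h

end HammingCube
end
end
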